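/- arXiv:1712.03412 — 11 statements merged into one kernel-verified Lean document; each statement's English description precedes it below -/
import Mathlib

section
/- Let β̂ be the elastic-net estimator (a global minimizer of F) with λ₂ > 0, and fix k ∈ {1,…,p}. Then β̂_k = 0 if and only if |(1/n)·∑_{i=1}^n x_{ik}·θ·(exp(⟨X_i,β̂⟩) − y_i)/(θ + exp(⟨X_i,β̂⟩))| ≤ λ₁. -/
open Real BigOperators Finset MeasureTheory

/-- Inner product of a row of the design matrix with a coefficient vector. -/
def dotp {p : ℕ} (u v : Fin p → ℝ) : ℝ := ∑ j, u j * v j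

/-- Average negative binomial negative log-likelihood. -/
noncomputable def negLogLik (n p : ℕ) (θ : ℝ) (x : Fin n → Fin p → ℝ)
    (y : Fin n → ℝ) (β : Fin p → ℝ) : ℝ :=
  -(1 / (n : ℝ)) *
    ∑ i, (y i * dotp (x i) β - (θ + y i) * Real.log (θ + Real.exp (dotp (x i) β)))

/-- Elastic-net objective function. -/
noncomputable def enObj (n p : ℕ) (θ : ℝ) (x : Fin n → Fin p → ℝ) (y : Fin n → ℝ)
    (lam1 lam2 : ℝ) (β : Fin p → ℝ) : ℝ :=
  negLogLik n p θ x y β + lam1 * ∑ j, |β j| + lam2 * ∑ j, (β j) ^ 2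

/-- `j`-th component of the gradient of the average negative log-likelihood. -/
noncomputable def gradComp (n p : ℕ) (θ : ℝ) (x : Fin n → Fin p → ℝ) (y : Fin n → ℝ)
    (β : Fin p → ℝ) (j : Fin p) : ℝ :=
  (1 / (n : ℝ)) *
    ∑ i, x i j * θ * (Real.exp (dotp (x i) β) - y i) / (θ + Real.exp (dotp (x i) β))

theorem sum_upd_aux {p : ℕ} (f : Fin p → ℝ → ℝ) (b : Fin p → ℝ) (k : Fin p) (v : ℝ) :
    ∑ j, f j (Function.update b k v j) = ∑ j, f j (b j) + (f k v - f k (b k)) := by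
  rw [← Finset.add_sum_erase _ _ (Finset.mem_univ k),
    ← Finset.add_sum_erase Finset.univ (fun j => f j (b j)) (Finset.mem_univ k)]
  have : ∑ j ∈ Finset.univ.erase k, f j (Function.update b k v j)
      = ∑ j ∈ Finset.univ.erase k, f j (b j) := by
    refine Finset.sum_congr rfl fun j hj => ?_
    rw [Function.update_of_ne (Finset.ne_of_mem_erase hj)]
  rw [this]
  simp only [Function.update_self]
  ring

theorem dotp_upd_aux {p : ℕ} (u b : Fin p → ℝ) (k : Fin p) (t : ℝ) :
    dotp u (Function.update b k (b k + t)) = dotp u b + t * u k := by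
  unfold dotp
  rw [sum_upd_aux (fun j z => u j * z) b k (b k + t)]
  ring

theorem deriv_aux (n p : ℕ) (θ : ℝ) (hθ : 0 < θ) (x : Fin n → Fin p → ℝ) (y : Fin n → ℝ)
    (b : Fin p → ℝ) (k : Fin p) :
    HasDerivAt (fun t : ℝ => negLogLik n p θ x y (Function.update b k (b k + t)))
      (gradComp n p θ x y b k) 0 := by
  unfold negLogLik gradComp
  simp only [dotp_upd_aux]
  have h : ∀ i, HasDerivAt (fun t : ℝ => y i * (dotp (x i) b + t * x i k)
      - (θ + y i) * Real.log (θ + Real.exp (dotp (x i) b + t * x i k)))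
      (-(x i k * θ * (Real.exp (dotp (x i) b) - y i) / (θ + Real.exp (dotp (x i) b)))) 0 := by
    intro i
    have hl : HasDerivAt (fun t : ℝ => dotp (x i) b + t * x i k) (x i k) 0 := by
      simpa using ((hasDerivAt_id (0 : ℝ)).mul_const (x i k)).const_add (dotp (x i) b)
    have hpos : 0 < θ + Real.exp (dotp (x i) b + 0 * x i k) := by positivity
    have h2 := (hl.const_mul (y i)).sub
      (((hl.exp.const_add θ).log hpos.ne').const_mul (θ + y i))
    refine h2.congr_deriv ?_
    have hpos' : θ + Real.exp (dotp (x i) b) ≠ 0 := by positivity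
    simp only [zero_mul, add_zero]
    field_simp
    ring
  refine ((HasDerivAt.fun_sum (fun i (_ : i ∈ Finset.univ) => h i)).const_mul
    (-(1 / (n : ℝ)))).congr_deriv ?_
  rw [Finset.sum_neg_distrib]
  ring

theorem deriv_nonneg_aux (h : ℝ → ℝ) (d : ℝ) (hd : HasDerivAt h d 0)
    (hm : ∀ t, 0 < t → h 0 ≤ h t) : 0 ≤ d := by
  have h1 := (hasDerivWithinAt_iff_tendsto_slope' (s := Set.Ioi (0 : ℝ)) (by simp)).1
    (hd.hasDerivWithinAt (s := Set.Ioi 0))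
  refine ge_of_tendsto h1 ?_
  filter_upwards [self_mem_nhdsWithin] with t ht
  have ht' : (0 : ℝ) < t := ht
  rw [slope_def_field]
  exact div_nonneg (by linarith [hm t ht']) (by linarith)

theorem stmt1
    (n p : ℕ) (hn : 1 ≤ n) (hp : 1 ≤ p)
    (θ : ℝ) (hθ : 0 < θ)
    (x : Fin n → Fin p → ℝ) (y : Fin n → ℝ) (hy : ∀ i, 0 ≤ y i)
    (lam1 lam2 : ℝ) (hlam1 : 0 < lam1) (hlam2 : 0 < lam2)
    (betah : Fin p → ℝ)
    (hmin : ∀ β : Fin p → ℝ,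
      enObj n p θ x y lam1 lam2 betah ≤ enObj n p θ x y lam1 lam2 β)
    (k : Fin p) :
    betah k = 0 ↔ |gradComp n p θ x y betah k| ≤ lam1 := by
  have hL := deriv_aux n p θ hθ x y betah k
  have hmin' : ∀ t : ℝ, negLogLik n p θ x y (Function.update betah k (betah k + 0))
      + lam1 * |betah k| + lam2 * (betah k) ^ 2 ≤
      negLogLik n p θ x y (Function.update betah k (betah k + t))
      + lam1 * |betah k + t| + lam2 * (betah k + t) ^ 2 := by
    intro t
    have h := hmin (Function.update betah k (betah k + t))
    unfold enObj at h
    rw [sum_upd_aux (fun _ z => |z|) betah k, sum_upd_aux (fun _ z => z ^ 2) betah k] at h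
    rw [add_zero, Function.update_eq_self]
    linarith
  obtain ⟨L, hLdef⟩ : ∃ L : ℝ → ℝ,
      L = fun t => negLogLik n p θ x y (Function.update betah k (betah k + t)) := ⟨_, rfl⟩
  rw [← hLdef] at hL
  have hm : ∀ t : ℝ, L 0 + lam1 * |betah k| + lam2 * (betah k) ^ 2 ≤
      L t + lam1 * |betah k + t| + lam2 * (betah k + t) ^ 2 := by
    intro t
    rw [hLdef]
    exact hmin' t
  generalize gradComp n p θ x y betah k = G at *
  generalize betah k = b at hm ⊢
  have hl : HasDerivAt (fun t : ℝ => b + t) 1 0 := by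
    simpa using (hasDerivAt_id (0 : ℝ)).const_add b
  have hsq : HasDerivAt (fun t : ℝ => lam2 * (b + t) ^ 2) (2 * lam2 * b) 0 := by
    refine ((hl.pow 2).const_mul lam2).congr_deriv ?_
    simp
    ring
  have hlin : ∀ s : ℝ, HasDerivAt (fun t : ℝ => L t + lam1 * (s * (b + t)) + lam2 * (b + t) ^ 2)
      (G + lam1 * s + 2 * lam2 * b) 0 := by
    intro s
    refine ((hL.add ((hl.const_mul s).const_mul lam1)).add hsq).congr_deriv ?_
    ring
  constructor
  · intro hb
    subst hb
    have h1 := deriv_nonneg_aux _ _ (hlin 1) (by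
      intro t ht
      have := hm t
      simp only [zero_add, abs_of_pos ht, abs_zero] at this
      simp only [zero_add]
      linarith)
    have hL' : HasDerivAt (fun t : ℝ => L (-t) + lam1 * t + lam2 * (0 + t) ^ 2)
        (-G + lam1 + 2 * lam2 * 0) 0 := by
      have h0 : HasDerivAt L G (-(0 : ℝ)) := by simpa using hL
      have h3 : HasDerivAt (fun t : ℝ => L (-t)) (-G) 0 := by
        exact (h0.comp (0 : ℝ) (hasDerivAt_neg (0 : ℝ))).congr_deriv (by ring)
      have h4 : HasDerivAt (fun t : ℝ => lam1 * t) lam1 0 := by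
        simpa using (hasDerivAt_id (0 : ℝ)).const_mul lam1
      exact (h3.add h4).add hsq
    have h2 := deriv_nonneg_aux _ _ hL' (by
      intro t ht
      have := hm (-t)
      simp only [zero_add, abs_neg, abs_of_pos ht, abs_zero, neg_sq] at this
      simp only [zero_add, neg_zero]
      linarith)
    rw [abs_le]
    constructor <;> linarith
  · intro hG
    by_contra hb
    rw [abs_le] at hG
    have hkey : ∀ s : ℝ, |b| = s * b → (∀ᶠ t in nhds (0 : ℝ), |b + t| = s * (b + t)) →
        G + lam1 * s + 2 * lam2 * b = 0 := by
      intro s hs hev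
      refine IsLocalMin.hasDerivAt_eq_zero ?_ (hlin s)
      filter_upwards [hev] with t ht
      have := hm t
      rw [ht, hs] at this
      simpa using this
    have hc : Filter.Tendsto (fun t : ℝ => b + t) (nhds 0) (nhds b) := by
      simpa using hl.continuousAt.tendsto
    rcases lt_or_gt_of_ne hb with h | h
    · have := hkey (-1) (by rw [abs_of_neg h]; ring) (by
        filter_upwards [hc.eventually (gt_mem_nhds h)] with t ht
        rw [abs_of_neg ht]; ring)
      nlinarith [mul_neg_of_pos_of_neg hlam2 h]
    · have := hkey 1 (by rw [abs_of_pos h]; ring) (by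
        filter_upwards [hc.eventually (lt_mem_nhds h)] with t ht
        rw [abs_of_pos ht]; ring)
      nlinarith [mul_pos hlam2 h]
end

section
/- Let β̂ be the elastic-net estimator, let β* ∈ ℝ^p with support H = {j : β*_j ≠ 0}, set z* = ‖ℓ̇(β*) + 2λ₂·β*‖_∞ and Δ = β̂ − β*. Then (λ₁ − z*)·‖Δ_{H^c}‖₁ ≤ Δᵀ·[ℓ̇(β̂) − ℓ̇(β*) + 2λ₂·Δ] + (λ₁ − z*)·‖Δ_{H^c}‖₁ ≤ (λ₁ + z*)·‖Δ_H‖₁. -/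
open Real BigOperators Finset MeasureTheory

lemma phi_mono (θ y a b : ℝ) (hθ : 0 < θ) (hy : 0 ≤ y) :
    0 ≤ (a - b) * (θ * (Real.exp a - y) / (θ + Real.exp a)
      - θ * (Real.exp b - y) / (θ + Real.exp b)) := by
  have ha := Real.exp_pos a
  have hb := Real.exp_pos b
  have e : θ * (Real.exp a - y) / (θ + Real.exp a) - θ * (Real.exp b - y) / (θ + Real.exp b)
      = (θ * (θ + y) / ((θ + Real.exp a) * (θ + Real.exp b))) * (Real.exp a - Real.exp b) := by
    field_simp
    ring
  rw [e]
  have h1 : 0 ≤ θ * (θ + y) / ((θ + Real.exp a) * (θ + Real.exp b)) := by positivity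
  have h2 : 0 ≤ (a - b) * (Real.exp a - Real.exp b) := by
    rcases le_total a b with h | h
    · exact mul_nonneg_of_nonpos_of_nonpos (by linarith)
        (by linarith [Real.exp_le_exp.mpr h])
    · exact mul_nonneg (by linarith) (by linarith [Real.exp_le_exp.mpr h])
  calc 0 ≤ _ := mul_nonneg h1 h2
    _ = _ := by ring

lemma sum_grad (n p : ℕ) (θ : ℝ) (x : Fin n → Fin p → ℝ) (y : Fin n → ℝ)
    (β d : Fin p → ℝ) :
    ∑ j, d j * gradComp n p θ x y β j = (1 / (n : ℝ)) * ∑ i, dotp (x i) d *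
      (θ * (Real.exp (dotp (x i) β) - y i) / (θ + Real.exp (dotp (x i) β))) := by
  simp only [gradComp, Finset.mul_sum]
  rw [Finset.sum_comm]
  refine Finset.sum_congr rfl fun i _ => ?_
  simp only [dotp, Finset.sum_mul, Finset.mul_sum]
  refine Finset.sum_congr rfl fun j _ => ?_
  ring

lemma dotp_line {p : ℕ} (u β d : Fin p → ℝ) (t : ℝ) :
    dotp u (fun j => β j + t * d j) = dotp u β + t * dotp u d := by
  simp only [dotp, Finset.mul_sum, ← Finset.sum_add_distrib]
  refine Finset.sum_congr rfl fun j _ => ?_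
  ring

lemma phi_deriv (θ y a b : ℝ) (hθ : 0 < θ) :
    HasDerivAt (fun t : ℝ => y * (a + t * b) - (θ + y) * Real.log (θ + Real.exp (a + t * b)))
      (-(b * (θ * (Real.exp a - y) / (θ + Real.exp a)))) 0 := by
  have hl : HasDerivAt (fun t : ℝ => a + t * b) b 0 := by
    simpa using ((hasDerivAt_id (0 : ℝ)).mul_const b).const_add a
  have ha := Real.exp_pos a
  have hlog := (hl.exp.const_add θ).log (by positivity)
  have h := (hl.const_mul y).sub (hlog.const_mul (θ + y))
  refine h.congr_deriv ?_
  simp only [zero_mul, add_zero]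
  field_simp
  ring

lemma negLogLik_deriv (n p : ℕ) (θ : ℝ) (hθ : 0 < θ) (x : Fin n → Fin p → ℝ) (y : Fin n → ℝ)
    (β d : Fin p → ℝ) :
    HasDerivAt (fun t : ℝ => negLogLik n p θ x y (fun j => β j + t * d j))
      (∑ j, d j * gradComp n p θ x y β j) 0 := by
  rw [sum_grad]
  simp only [negLogLik, dotp_line]
  have h := (HasDerivAt.fun_sum (u := Finset.univ) fun i _ =>
    phi_deriv θ (y i) (dotp (x i) β) (dotp (x i) d) hθ).const_mul (-(1 / (n : ℝ)))
  refine h.congr_deriv ?_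
  rw [Finset.sum_neg_distrib]
  ring

lemma sq_deriv (p : ℕ) (β d : Fin p → ℝ) :
    HasDerivAt (fun t : ℝ => ∑ j, (β j + t * d j) ^ 2) (∑ j, 2 * (d j * β j)) 0 := by
  refine HasDerivAt.fun_sum fun j _ => ?_
  have hl : HasDerivAt (fun t : ℝ => β j + t * d j) (d j) 0 := by
    simpa using ((hasDerivAt_id (0 : ℝ)).mul_const (d j)).const_add (β j)
  refine (hl.fun_pow 2).congr_deriv ?_
  simp
  ring

lemma deriv_nonneg_right (f : ℝ → ℝ) (f' : ℝ) (hf : HasDerivAt f f' 0)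
    (h : ∀ t, 0 < t → t < 1 → f 0 ≤ f t) : 0 ≤ f' := by
  refine ge_of_tendsto hf.tendsto_slope_zero_right ?_
  filter_upwards [Ioo_mem_nhdsGT (zero_lt_one (α := ℝ))] with t ht
  have := h t ht.1 ht.2
  simp only [zero_add, smul_eq_mul]
  exact mul_nonneg (inv_nonneg.mpr ht.1.le) (by linarith)

lemma first_order (n p : ℕ) (θ : ℝ) (hθ : 0 < θ) (x : Fin n → Fin p → ℝ) (y : Fin n → ℝ)
    (lam1 lam2 : ℝ) (hlam1 : 0 < lam1) (b s : Fin p → ℝ)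
    (hmin : ∀ β : Fin p → ℝ, enObj n p θ x y lam1 lam2 b ≤ enObj n p θ x y lam1 lam2 β) :
    0 ≤ ∑ j, (s j - b j) * gradComp n p θ x y b j + lam1 * (∑ j, |s j| - ∑ j, |b j|)
      + lam2 * ∑ j, 2 * ((s j - b j) * b j) := by
  have hd := ((negLogLik_deriv n p θ hθ x y b (fun j => s j - b j)).add
    ((hasDerivAt_id (0 : ℝ)).mul_const (lam1 * (∑ j, |s j| - ∑ j, |b j|)))).add
    ((sq_deriv p b (fun j => s j - b j)).const_mul lam2)
  have := deriv_nonneg_right _ _ hd ?_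
  · simpa using this
  intro t h0 h1
  have hm := hmin (fun j => b j + t * (s j - b j))
  have habs : ∑ j, |b j + t * (s j - b j)| ≤ ∑ j, |b j| + t * (∑ j, |s j| - ∑ j, |b j|) := by
    rw [← Finset.sum_sub_distrib, Finset.mul_sum, ← Finset.sum_add_distrib]
    refine Finset.sum_le_sum fun j _ => ?_
    have e : b j + t * (s j - b j) = (1 - t) * b j + t * s j := by ring
    rw [e]
    refine (abs_add_le _ _).trans ?_
    rw [abs_mul, abs_mul, abs_of_pos h0, abs_of_pos (by linarith : (0 : ℝ) < 1 - t)]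
    linarith
  have := mul_le_mul_of_nonneg_left habs hlam1.le
  simp only [enObj] at hm
  simp only [Pi.add_apply, id, zero_mul, add_zero]
  linarith

theorem stmt2
    (n p : ℕ) (hn : 1 ≤ n) (hp : 1 ≤ p)
    (θ : ℝ) (hθ : 0 < θ)
    (x : Fin n → Fin p → ℝ) (y : Fin n → ℝ) (hy : ∀ i, 0 ≤ y i)
    (lam1 lam2 : ℝ) (hlam1 : 0 < lam1) (hlam2 : 0 < lam2)
    (betah : Fin p → ℝ)
    (hmin : ∀ β : Fin p → ℝ,
      enObj n p θ x y lam1 lam2 betah ≤ enObj n p θ x y lam1 lam2 β)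
    (betas : Fin p → ℝ)
    (H : Finset (Fin p)) (hH : H = Finset.univ.filter (fun j => betas j ≠ 0))
    (zstar : ℝ)
    (hz : zstar = ⨆ j : Fin p, |gradComp n p θ x y betas j + 2 * lam2 * betas j|)
    (Δ : Fin p → ℝ) (hΔ : Δ = fun j => betah j - betas j) :
    (lam1 - zstar) * (∑ j ∈ Hᶜ, |Δ j|) ≤
        (∑ j, Δ j * (gradComp n p θ x y betah j - gradComp n p θ x y betas j
            + 2 * lam2 * Δ j))
          + (lam1 - zstar) * (∑ j ∈ Hᶜ, |Δ j|) ∧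
      (∑ j, Δ j * (gradComp n p θ x y betah j - gradComp n p θ x y betas j
            + 2 * lam2 * Δ j))
          + (lam1 - zstar) * (∑ j ∈ Hᶜ, |Δ j|)
        ≤ (lam1 + zstar) * (∑ j ∈ H, |Δ j|) := by
  have hzj : ∀ j, |gradComp n p θ x y betas j + 2 * lam2 * betas j| ≤ zstar := by
    intro j
    rw [hz]
    exact le_ciSup (f := fun j => |gradComp n p θ x y betas j + 2 * lam2 * betas j|)
      (Set.finite_range _).bddAbove j
  have hΔj : ∀ j, Δ j = betah j - betas j := fun j => by rw [hΔ]
  constructor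
  · have h1 : 0 ≤ ∑ j, Δ j * gradComp n p θ x y betah j
        - ∑ j, Δ j * gradComp n p θ x y betas j := by
      rw [sum_grad, sum_grad, ← mul_sub, ← Finset.sum_sub_distrib]
      refine mul_nonneg (by positivity) (Finset.sum_nonneg fun i _ => ?_)
      have e : dotp (x i) Δ = dotp (x i) betah - dotp (x i) betas := by
        simp only [dotp, hΔj, ← Finset.sum_sub_distrib, mul_sub]
      rw [← mul_sub, e]
      exact phi_mono _ _ _ _ hθ (hy i)
    have h2 : 0 ≤ ∑ j, 2 * lam2 * (Δ j) ^ 2 :=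
      Finset.sum_nonneg fun j _ => by positivity
    have e : ∑ j, Δ j * (gradComp n p θ x y betah j - gradComp n p θ x y betas j
            + 2 * lam2 * Δ j) = ∑ j, Δ j * gradComp n p θ x y betah j
        - ∑ j, Δ j * gradComp n p θ x y betas j + ∑ j, 2 * lam2 * (Δ j) ^ 2 := by
      rw [← Finset.sum_sub_distrib, ← Finset.sum_add_distrib]
      exact Finset.sum_congr rfl fun j _ => by ring
    linarith
  · have hfo := first_order n p θ hθ x y lam1 lam2 hlam1 betah betas hmin
    have key : ∑ j, Δ j * (gradComp n p θ x y betah j - gradComp n p θ x y betas j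
            + 2 * lam2 * Δ j) ≤ ∑ j, (lam1 * (|betas j| - |betah j|) + zstar * |Δ j|) := by
      have e : ∑ j, (betas j - betah j) * gradComp n p θ x y betah j
          + lam1 * (∑ j, |betas j| - ∑ j, |betah j|)
          + lam2 * ∑ j, 2 * ((betas j - betah j) * betah j)
          = ∑ j, (-(Δ j) * (gradComp n p θ x y betah j + 2 * lam2 * betah j)
            + lam1 * (|betas j| - |betah j|)) := by
        rw [← Finset.sum_sub_distrib, Finset.mul_sum, Finset.mul_sum,
          ← Finset.sum_add_distrib, ← Finset.sum_add_distrib]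
        exact Finset.sum_congr rfl fun j _ => by rw [hΔj]; ring
      rw [e] at hfo
      rw [← sub_nonneg, ← Finset.sum_sub_distrib]
      refine hfo.trans (Finset.sum_le_sum fun j _ => ?_)
      have h1 : -(Δ j * (gradComp n p θ x y betas j + 2 * lam2 * betas j)) ≤ zstar * |Δ j| := by
        refine (neg_le_abs _).trans ?_
        rw [abs_mul, mul_comm]
        exact mul_le_mul_of_nonneg_right (hzj j) (abs_nonneg _)
      have e2 : 2 * lam2 * Δ j = 2 * lam2 * betah j - 2 * lam2 * betas j := by
        rw [hΔj]; ring
      rw [e2]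
      linarith
    rw [← Finset.sum_add_sum_compl H (fun j => lam1 * (|betas j| - |betah j|) + zstar * |Δ j|)]
      at key
    have hA : ∑ j ∈ H, (lam1 * (|betas j| - |betah j|) + zstar * |Δ j|)
        ≤ (lam1 + zstar) * ∑ j ∈ H, |Δ j| := by
      rw [Finset.mul_sum]
      refine Finset.sum_le_sum fun j _ => ?_
      have h3 : |betas j| - |betah j| ≤ |Δ j| := by
        rw [hΔj, abs_sub_comm]
        exact abs_sub_abs_le_abs_sub _ _
      have := mul_le_mul_of_nonneg_left h3 hlam1.le
      linarith
    have hB : ∑ j ∈ Hᶜ, (lam1 * (|betas j| - |betah j|) + zstar * |Δ j|)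
        = -((lam1 - zstar) * ∑ j ∈ Hᶜ, |Δ j|) := by
      rw [Finset.mul_sum, ← Finset.sum_neg_distrib]
      refine Finset.sum_congr rfl fun j hj => ?_
      have h0 : betas j = 0 := by
        simpa [hH] using hj
      rw [hΔj, h0]
      simp
      ring
    linarith
end

section
/- For all β, δ ∈ ℝ^p one has δᵀ·(ℓ̇(β+δ) − ℓ̇(β)) ≥ exp(−2K·‖δ‖₁)·δᵀ·ℓ̈(β)·δ, where K = max{|x_{ij}| : 1 ≤ i ≤ n, 1 ≤ j ≤ p}. -/
open Real BigOperators Finset MeasureTheory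

/-- The quadratic form `δᵀ ℓ̈(β) δ` of the Hessian
`ℓ̈(β) = (1/n) ∑ᵢ Xᵢ Xᵢᵀ θ(θ+yᵢ)e^{⟨Xᵢ,β⟩}/(θ+e^{⟨Xᵢ,β⟩})²`. -/
noncomputable def hessQuad (n p : ℕ) (θ : ℝ) (x : Fin n → Fin p → ℝ) (y : Fin n → ℝ)
    (β δ : Fin p → ℝ) : ℝ :=
  (1 / (n : ℝ)) *
    ∑ i, (dotp (x i) δ) ^ 2 *
      (θ * (θ + y i) * Real.exp (dotp (x i) β) / (θ + Real.exp (dotp (x i) β)) ^ 2)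

lemma aux_exp (d : ℝ) : Real.exp (-|d|) * d ^ 2 ≤ d * (Real.exp d - 1) := by
  rcases le_total 0 d with h | h
  · rw [abs_of_nonneg h]
    have h1 : Real.exp (-d) ≤ 1 := Real.exp_le_one_iff.mpr (by linarith)
    have h2 := Real.add_one_le_exp d
    have h3 : Real.exp (-d) * d ^ 2 ≤ 1 * d ^ 2 := by gcongr
    have h4 : d * d ≤ d * (Real.exp d - 1) := by gcongr; linarith
    nlinarith
  · rw [abs_of_nonpos h, neg_neg]
    have h2 := Real.add_one_le_exp (-d)
    have h3 : Real.exp d * (-d + 1) ≤ Real.exp d * Real.exp (-d) := by gcongr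
    rw [← Real.exp_add, add_neg_cancel, Real.exp_zero] at h3
    nlinarith [mul_nonneg (neg_nonneg.mpr h) (sub_nonneg.mpr h3)]

lemma aux_term (θ y t d M : ℝ) (hθ : 0 < θ) (hy : 0 ≤ y) (hM : |d| ≤ M) :
    Real.exp (-2 * M) * (d ^ 2 * (θ * (θ + y) * Real.exp t / (θ + Real.exp t) ^ 2)) ≤
      d * (θ * (Real.exp (t + d) - y) / (θ + Real.exp (t + d))
        - θ * (Real.exp t - y) / (θ + Real.exp t)) := by
  have ha := Real.exp_pos t
  have he := Real.exp_pos d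
  have h0 := aux_exp d
  rw [Real.exp_add]
  set a := Real.exp t
  set e := Real.exp d
  have hb : 0 < a * e := by positivity
  have h1 : θ + a * e ≤ Real.exp |d| * (θ + a) := by
    have : e ≤ Real.exp |d| := Real.exp_le_exp.mpr (le_abs_self d)
    have h' : 1 ≤ Real.exp |d| := Real.one_le_exp (abs_nonneg d)
    nlinarith
  have h2 : Real.exp (-2 * M) ≤ Real.exp (-|d|) * Real.exp (-|d|) := by
    rw [← Real.exp_add]; exact Real.exp_le_exp.mpr (by linarith)
  have h3 : Real.exp (-|d|) * Real.exp |d| = 1 := by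
    rw [← Real.exp_add]; simp
  have key : Real.exp (-2 * M) * d ^ 2 * (θ + a * e) ≤ d * (e - 1) * (θ + a) := by
    calc Real.exp (-2 * M) * d ^ 2 * (θ + a * e)
        ≤ (Real.exp (-|d|) * Real.exp (-|d|)) * d ^ 2 * (Real.exp |d| * (θ + a)) := by gcongr
      _ = (Real.exp (-|d|) * Real.exp |d|) * (Real.exp (-|d|) * d ^ 2) * (θ + a) := by ring
      _ ≤ d * (e - 1) * (θ + a) := by rw [h3, one_mul]; gcongr
  have e1 : Real.exp (-2 * M) * (d ^ 2 * (θ * (θ + y) * a / (θ + a) ^ 2)) =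
      (θ * (θ + y) * a / ((θ + a) ^ 2 * (θ + a * e))) *
        (Real.exp (-2 * M) * d ^ 2 * (θ + a * e)) := by
    field_simp
  have e2 : d * (θ * (a * e - y) / (θ + a * e) - θ * (a - y) / (θ + a)) =
      (θ * (θ + y) * a / ((θ + a) ^ 2 * (θ + a * e))) * (d * (e - 1) * (θ + a)) := by
    field_simp
    ring
  rw [e1, e2]
  gcongr

theorem stmt4
    (n p : ℕ) (hn : 1 ≤ n) (hp : 1 ≤ p)
    (θ : ℝ) (hθ : 0 < θ)
    (x : Fin n → Fin p → ℝ) (y : Fin n → ℝ) (hy : ∀ i, 0 ≤ y i)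
    (K : ℝ) (hKub : ∀ i j, |x i j| ≤ K) (hKmax : ∃ i j, |x i j| = K) :
    ∀ β δ : Fin p → ℝ,
      Real.exp (-2 * K * ∑ j, |δ j|) * hessQuad n p θ x y β δ ≤
        ∑ j, δ j * (gradComp n p θ x y (fun l => β l + δ l) j - gradComp n p θ x y β j) := by
  intro β δ
  have hR : ∑ j, δ j * (gradComp n p θ x y (fun l => β l + δ l) j - gradComp n p θ x y β j) =
      (1 / (n : ℝ)) * ∑ i, dotp (x i) δ *
        (θ * (Real.exp (dotp (x i) β + dotp (x i) δ) - y i) /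
            (θ + Real.exp (dotp (x i) β + dotp (x i) δ))
          - θ * (Real.exp (dotp (x i) β) - y i) / (θ + Real.exp (dotp (x i) β))) := by
    have hadd : ∀ i, dotp (x i) (fun l => β l + δ l) = dotp (x i) β + dotp (x i) δ := by
      intro i
      simp only [dotp, mul_add, Finset.sum_add_distrib]
    have hd : ∀ i (c : ℝ), dotp (x i) δ * c = ∑ j, x i j * δ j * c := by
      intro i c
      simp only [dotp, Finset.sum_mul]
    simp only [gradComp, hadd]
    simp only [hd]
    rw [Finset.sum_comm, Finset.mul_sum]
    refine Finset.sum_congr rfl fun j _ => ?_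
    rw [← mul_sub, ← Finset.sum_sub_distrib, mul_left_comm, Finset.mul_sum]
    congr 1
    refine Finset.sum_congr rfl fun i _ => ?_
    ring
  rw [hR, hessQuad, mul_left_comm, Finset.mul_sum]
  refine mul_le_mul_of_nonneg_left (Finset.sum_le_sum fun i _ => ?_) (by positivity)
  rw [mul_assoc (-2 : ℝ)]
  refine aux_term θ (y i) _ _ _ hθ (hy i) ?_
  rw [dotp, Finset.mul_sum]
  refine (Finset.abs_sum_le_sum_abs _ _).trans (Finset.sum_le_sum fun j _ => ?_)
  rw [abs_mul]
  exact mul_le_mul_of_nonneg_right (hKub i j) (abs_nonneg _)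
end

section
/- Let μ_1,…,μ_n ∈ ℝ and β, b ∈ ℝ^p. Then there exist reals t_1,…,t_n, with each t_i lying in the closed interval between ⟨X_i,β⟩ and ⟨X_i,b⟩, such that (1/n)·∑_{i=1}^n (y_i − μ_i)·[ ⟨X_i, b − β⟩ − log( (θ + exp(⟨X_i,b⟩)) / (θ + exp(⟨X_i,β⟩)) ) ] = ∑_{j=1}^p (b_j − β_j)·(1/n)·∑_{i=1}^n θ·x_{ij}·(y_i − μ_i)/(θ + exp(t_i)). Consequently, if λ₁ > 0 and max_{1≤j≤p} |(1/n)·∑_{i=1}^n θ·x_{ij}·(y_i − μ_i)/(θ + exp(t_i))| ≤ λ₁/4 for these t_i, then the absolute value of the left-hand side is at most (λ₁/4)·‖b − β‖₁. -/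
open Real BigOperators Finset MeasureTheory

lemma mvt_aux (θ : ℝ) (hθ : 0 < θ) (a c : ℝ) :
    ∃ t ∈ Set.uIcc a c, (c - a) - Real.log ((θ + Real.exp c) / (θ + Real.exp a))
      = θ / (θ + Real.exp t) * (c - a) := by
  have hpos : ∀ s : ℝ, 0 < θ + Real.exp s := fun s => by positivity
  have hd : ∀ s : ℝ, HasDerivAt (fun s => s - Real.log (θ + Real.exp s))
      (θ / (θ + Real.exp s)) s := by
    intro s
    have h := (hasDerivAt_id s).sub
      (((Real.hasDerivAt_exp s).const_add θ).log (hpos s).ne')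
    refine h.congr_deriv ?_
    have := (hpos s).ne'
    field_simp
    ring
  have hc : Continuous (fun s => s - Real.log (θ + Real.exp s)) :=
    continuous_iff_continuousAt.2 fun s => (hd s).continuousAt
  rw [Real.log_div (hpos c).ne' (hpos a).ne']
  rcases lt_trichotomy a c with h | h | h
  · obtain ⟨t, ht, he⟩ := exists_hasDerivAt_eq_slope _ _ h hc.continuousOn (fun s _ => hd s)
    refine ⟨t, Set.Icc_subset_uIcc (Set.Ioo_subset_Icc_self ht), ?_⟩
    rw [he, div_mul_cancel₀ _ (sub_pos.2 h).ne']
    ring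
  · subst h
    exact ⟨a, by simp, by simp⟩
  · obtain ⟨t, ht, he⟩ := exists_hasDerivAt_eq_slope _ _ h hc.continuousOn (fun s _ => hd s)
    refine ⟨t, Set.Icc_subset_uIcc' (Set.Ioo_subset_Icc_self ht), ?_⟩
    rw [he, ← neg_sub a c, mul_neg, div_mul_cancel₀ _ (sub_pos.2 h).ne']
    ring

theorem stmt8
    (n p : ℕ) (hn : 1 ≤ n) (hp : 1 ≤ p)
    (θ : ℝ) (hθ : 0 < θ)
    (x : Fin n → Fin p → ℝ) (y : Fin n → ℝ)
    (μ : Fin n → ℝ) (β b : Fin p → ℝ) :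
    ∃ t : Fin n → ℝ,
      (∀ i, t i ∈ Set.uIcc (dotp (x i) β) (dotp (x i) b)) ∧
      (1 / (n : ℝ)) * ∑ i, (y i - μ i) *
          (dotp (x i) (fun j => b j - β j)
            - Real.log ((θ + Real.exp (dotp (x i) b)) / (θ + Real.exp (dotp (x i) β))))
        = ∑ j, (b j - β j) *
            ((1 / (n : ℝ)) * ∑ i, θ * x i j * (y i - μ i) / (θ + Real.exp (t i))) ∧
      ∀ lam1 : ℝ, 0 < lam1 →
        (∀ j, |(1 / (n : ℝ)) * ∑ i, θ * x i j * (y i - μ i) / (θ + Real.exp (t i))|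
            ≤ lam1 / 4) →
        |(1 / (n : ℝ)) * ∑ i, (y i - μ i) *
            (dotp (x i) (fun j => b j - β j)
              - Real.log ((θ + Real.exp (dotp (x i) b)) / (θ + Real.exp (dotp (x i) β))))|
          ≤ lam1 / 4 * ∑ j, |b j - β j| := by
  choose t ht he using fun i => mvt_aux θ hθ (dotp (x i) β) (dotp (x i) b)
  have hdot : ∀ i, dotp (x i) (fun j => b j - β j) = dotp (x i) b - dotp (x i) β := by
    intro i
    simp only [dotp, mul_sub, Finset.sum_sub_distrib]
  have key : (1 / (n : ℝ)) * ∑ i, (y i - μ i) *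
          (dotp (x i) (fun j => b j - β j)
            - Real.log ((θ + Real.exp (dotp (x i) b)) / (θ + Real.exp (dotp (x i) β))))
        = ∑ j, (b j - β j) *
            ((1 / (n : ℝ)) * ∑ i, θ * x i j * (y i - μ i) / (θ + Real.exp (t i))) := by
    have h1 : ∀ i, (y i - μ i) *
          (dotp (x i) (fun j => b j - β j)
            - Real.log ((θ + Real.exp (dotp (x i) b)) / (θ + Real.exp (dotp (x i) β))))
        = ∑ j, (b j - β j) * (θ * x i j * (y i - μ i) / (θ + Real.exp (t i))) := by
      intro i
      rw [hdot, he, ← hdot, dotp, Finset.mul_sum, Finset.mul_sum]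
      exact Finset.sum_congr rfl fun j _ => by ring
    rw [Finset.sum_congr rfl fun i _ => h1 i, Finset.sum_comm, Finset.mul_sum]
    refine Finset.sum_congr rfl fun j _ => ?_
    rw [← Finset.mul_sum]
    ring
  refine ⟨t, ht, key, fun l _ hl => ?_⟩
  rw [key, Finset.mul_sum]
  refine (Finset.abs_sum_le_sum_abs _ _).trans (Finset.sum_le_sum fun j _ => ?_)
  rw [abs_mul, mul_comm]
  exact mul_le_mul_of_nonneg_right (hl j) (abs_nonneg _)
end

section
/- Assume ‖β*‖_∞ ≤ B for some B > 0, λ₁ = 8B·λ₂, and ε_n ≥ 0. If (P_n − P)(l₁(β*,·,·) − l₁(β̂,·,·)) ≤ (λ₁/4)·‖β̂ − β*‖₁ and (P_n − P)(l₂(β*,·) − l₂(β̂,·)) ≤ (λ₁/4)·(‖β̂ − β*‖₁ + ε_n), then ∑_{j∉H} |β̂_j − β*_j| ≤ 3.5·∑_{j∈H} |β̂_j − β*_j| + ε_n/2. -/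
open Real BigOperators Finset MeasureTheory

/-- Negative binomial loss `l(β,x,y)`. -/
noncomputable def nbLoss (p : ℕ) (θ : ℝ) (β x : Fin p → ℝ) (y : ℝ) : ℝ :=
  -y * dotp x β + (θ + y) * Real.log (θ + Real.exp (dotp x β))

/-- First part `l₁(β,x,y)` of the loss. -/
noncomputable def nbLoss1 (p : ℕ) (θ : ℝ) (β x : Fin p → ℝ) (y : ℝ) : ℝ :=
  -y * (dotp x β - Real.log (θ + Real.exp (dotp x β)))

/-- Second part `l₂(β,x)` of the loss. -/
noncomputable def nbLoss2 (p : ℕ) (θ : ℝ) (β x : Fin p → ℝ) : ℝ :=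
  θ * Real.log (θ + Real.exp (dotp x β))

theorem stmt10
    (n p : ℕ) (hn : 1 ≤ n) (hp : 1 ≤ p)
    (θ L : ℝ) (hθ : 0 < θ) (hL : 0 < L)
    (Q : Measure ((Fin p → ℝ) × ℝ)) [IsProbabilityMeasure Q]
    (hsupp : ∀ᵐ z ∂Q, (∀ j, |z.1 j| ≤ L) ∧ 0 ≤ z.2)
    (hInt : ∀ β : Fin p → ℝ, Integrable (fun z => nbLoss p θ β z.1 z.2) Q)
    (hInt1 : ∀ β : Fin p → ℝ, Integrable (fun z => nbLoss1 p θ β z.1 z.2) Q)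
    (hInt2 : ∀ β : Fin p → ℝ, Integrable (fun z => nbLoss2 p θ β z.1) Q)
    (xs : Fin n → Fin p → ℝ) (ys : Fin n → ℝ)
    (hxs : ∀ i j, |xs i j| ≤ L) (hys : ∀ i, 0 ≤ ys i)
    (lam1 lam2 : ℝ) (hlam1 : 0 < lam1) (hlam2 : 0 < lam2)
    (betas : Fin p → ℝ)
    (hbetas : ∀ β : Fin p → ℝ,
      ∫ z, nbLoss p θ betas z.1 z.2 ∂Q ≤ ∫ z, nbLoss p θ β z.1 z.2 ∂Q)
    (H : Finset (Fin p)) (hH : H = Finset.univ.filter (fun j => betas j ≠ 0))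
    (betah : Fin p → ℝ)
    (hbetah : ∀ β : Fin p → ℝ,
      (1 / (n : ℝ)) * (∑ i, nbLoss p θ betah (xs i) (ys i))
          + lam1 * ∑ j, |betah j| + lam2 * ∑ j, (betah j) ^ 2
        ≤ (1 / (n : ℝ)) * (∑ i, nbLoss p θ β (xs i) (ys i))
          + lam1 * ∑ j, |β j| + lam2 * ∑ j, (β j) ^ 2)
    (B : ℝ) (hBpos : 0 < B) (hB : ∀ j, |betas j| ≤ B)
    (hlam12 : lam1 = 8 * B * lam2)
    (eps : ℝ) (heps : 0 ≤ eps)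
    (hemp1 : (1 / (n : ℝ)) * (∑ i, (nbLoss1 p θ betas (xs i) (ys i)
            - nbLoss1 p θ betah (xs i) (ys i)))
          - ∫ z, (nbLoss1 p θ betas z.1 z.2 - nbLoss1 p θ betah z.1 z.2) ∂Q
        ≤ lam1 / 4 * ∑ j, |betah j - betas j|)
    (hemp2 : (1 / (n : ℝ)) * (∑ i, (nbLoss2 p θ betas (xs i)
            - nbLoss2 p θ betah (xs i)))
          - ∫ z, (nbLoss2 p θ betas z.1 - nbLoss2 p θ betah z.1) ∂Q
        ≤ lam1 / 4 * ((∑ j, |betah j - betas j|) + eps)) :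
    ∑ j ∈ Hᶜ, |betah j - betas j| ≤ 3.5 * (∑ j ∈ H, |betah j - betas j|) + eps / 2 := by
  have hsplit : ∀ (β x : Fin p → ℝ) (y : ℝ),
      nbLoss p θ β x y = nbLoss1 p θ β x y + nbLoss2 p θ β x := by
    intro β x y
    unfold nbLoss nbLoss1 nbLoss2
    ring
  have h1 := hbetah betas
  have h2 := hbetas betah
  simp only [hsplit] at h1 h2
  rw [integral_add (hInt1 _) (hInt2 _), integral_add (hInt1 _) (hInt2 _)] at h2
  rw [integral_sub (hInt1 _) (hInt1 _)] at hemp1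
  rw [integral_sub (hInt2 _) (hInt2 _)] at hemp2
  simp only [Finset.sum_add_distrib, Finset.sum_sub_distrib, mul_add, mul_sub] at h1 hemp1 hemp2
  have hA : ∑ j ∈ H, (lam1 * (|betas j| - |betah j|) + lam2 * (betas j ^ 2 - betah j ^ 2))
      ≤ ∑ j ∈ H, (5 / 4 * lam1 * |betah j - betas j|) := by
    refine Finset.sum_le_sum fun j _ => ?_
    have t1 : |betas j| - |betah j| ≤ |betah j - betas j| := by
      rw [abs_sub_comm]; exact abs_sub_abs_le_abs_sub _ _
    have t2 : betas j ^ 2 - betah j ^ 2 ≤ 2 * B * |betah j - betas j| := by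
      have e : betas j * (betas j - betah j) ≤ B * |betah j - betas j| := by
        calc betas j * (betas j - betah j) ≤ |betas j * (betas j - betah j)| := le_abs_self _
          _ = |betas j| * |betah j - betas j| := by rw [abs_mul, abs_sub_comm]
          _ ≤ _ := mul_le_mul_of_nonneg_right (hB j) (abs_nonneg _)
      nlinarith [sq_nonneg (betas j - betah j)]
    have t3 := mul_le_mul_of_nonneg_left t1 hlam1.le
    have t4 := mul_le_mul_of_nonneg_left t2 hlam2.le
    have t5 : lam2 * (2 * B * |betah j - betas j|) = 1 / 4 * lam1 * |betah j - betas j| := by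
      rw [hlam12]; ring
    linarith
  have hC : ∑ j ∈ Hᶜ, (lam1 * (|betas j| - |betah j|) + lam2 * (betas j ^ 2 - betah j ^ 2))
      ≤ ∑ j ∈ Hᶜ, (-lam1 * |betah j - betas j|) := by
    refine Finset.sum_le_sum fun j hj => ?_
    have hz : betas j = 0 := by
      by_contra h
      simp [hH, h] at hj
    rw [hz]
    have := mul_nonneg hlam2.le (sq_nonneg (betah j))
    simp only [abs_zero, sub_zero]
    nlinarith
  have hT := Finset.sum_add_sum_compl H
    (fun j => lam1 * (|betas j| - |betah j|) + lam2 * (betas j ^ 2 - betah j ^ 2))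
  have hD := Finset.sum_add_sum_compl H (fun j => |betah j - betas j|)
  rw [← Finset.mul_sum] at hA hC
  have hE : ∑ j, (lam1 * (|betas j| - |betah j|) + lam2 * (betas j ^ 2 - betah j ^ 2))
      = lam1 * ∑ j, |betas j| - lam1 * ∑ j, |betah j|
        + (lam2 * ∑ j, betas j ^ 2 - lam2 * ∑ j, betah j ^ 2) := by
    rw [Finset.sum_add_distrib, ← Finset.mul_sum, ← Finset.mul_sum, Finset.sum_sub_distrib,
      Finset.sum_sub_distrib, mul_sub, mul_sub]
  rw [← hD] at hemp1 hemp2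
  refine le_of_mul_le_mul_left ?_ hlam1
  linarith
end

section
/- Assume ‖β*‖_∞ ≤ B for some B > 0, λ₁ = 8B·λ₂, and ε_n ≥ 0. Let Σ = ∫ x·xᵀ dQ(x,y) and suppose: (i) (P_n − P)(l₁(β*,·,·) − l₁(β̂,·,·)) ≤ (λ₁/4)·‖β̂ − β*‖₁ and (P_n − P)(l₂(β*,·) − l₂(β̂,·)) ≤ (λ₁/4)·(‖β̂ − β*‖₁ + ε_n); (ii) there is a > 0 with P l(β̂,·,·) − P l(β*,·,·) ≥ a·(β̂ − β*)ᵀ·Σ·(β̂ − β*); (iii) the Stabil condition holds: for every b ∈ ℝ^p with ∑_{j∉H}|b_j| ≤ 3.5·∑_{j∈H}|b_j| + ε_n/2 one has bᵀ·Σ·b ≥ k·∑_{j∈H} b_j² − ε_n/2, where 0 < k < 1. Then ‖β̂ − β*‖₁ ≤ (2.25)²·λ₁·d*/(a·k + 2λ₂) + (1 + a/λ₁)·ε_n. -/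
open Real BigOperators Finset MeasureTheory

theorem stmt11
    (n p : ℕ) (hn : 1 ≤ n) (hp : 1 ≤ p)
    (θ L : ℝ) (hθ : 0 < θ) (hL : 0 < L)
    (Q : Measure ((Fin p → ℝ) × ℝ)) [IsProbabilityMeasure Q]
    (hsupp : ∀ᵐ z ∂Q, (∀ j, |z.1 j| ≤ L) ∧ 0 ≤ z.2)
    (hInt : ∀ β : Fin p → ℝ, Integrable (fun z => nbLoss p θ β z.1 z.2) Q)
    (hInt1 : ∀ β : Fin p → ℝ, Integrable (fun z => nbLoss1 p θ β z.1 z.2) Q)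
    (hInt2 : ∀ β : Fin p → ℝ, Integrable (fun z => nbLoss2 p θ β z.1) Q)
    (xs : Fin n → Fin p → ℝ) (ys : Fin n → ℝ)
    (hxs : ∀ i j, |xs i j| ≤ L) (hys : ∀ i, 0 ≤ ys i)
    (lam1 lam2 : ℝ) (hlam1 : 0 < lam1) (hlam2 : 0 < lam2)
    (betas : Fin p → ℝ)
    (hbetas : ∀ β : Fin p → ℝ,
      ∫ z, nbLoss p θ betas z.1 z.2 ∂Q ≤ ∫ z, nbLoss p θ β z.1 z.2 ∂Q)
    (H : Finset (Fin p)) (hH : H = Finset.univ.filter (fun j => betas j ≠ 0))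
    (betah : Fin p → ℝ)
    (hbetah : ∀ β : Fin p → ℝ,
      (1 / (n : ℝ)) * (∑ i, nbLoss p θ betah (xs i) (ys i))
          + lam1 * ∑ j, |betah j| + lam2 * ∑ j, (betah j) ^ 2
        ≤ (1 / (n : ℝ)) * (∑ i, nbLoss p θ β (xs i) (ys i))
          + lam1 * ∑ j, |β j| + lam2 * ∑ j, (β j) ^ 2)
    (B : ℝ) (hBpos : 0 < B) (hB : ∀ j, |betas j| ≤ B)
    (hlam12 : lam1 = 8 * B * lam2)
    (eps : ℝ) (heps : 0 ≤ eps)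
    (hemp1 : (1 / (n : ℝ)) * (∑ i, (nbLoss1 p θ betas (xs i) (ys i)
            - nbLoss1 p θ betah (xs i) (ys i)))
          - ∫ z, (nbLoss1 p θ betas z.1 z.2 - nbLoss1 p θ betah z.1 z.2) ∂Q
        ≤ lam1 / 4 * ∑ j, |betah j - betas j|)
    (hemp2 : (1 / (n : ℝ)) * (∑ i, (nbLoss2 p θ betas (xs i)
            - nbLoss2 p θ betah (xs i)))
          - ∫ z, (nbLoss2 p θ betas z.1 - nbLoss2 p θ betah z.1) ∂Q
        ≤ lam1 / 4 * ((∑ j, |betah j - betas j|) + eps))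
    (a : ℝ) (ha : 0 < a)
    (hquad : ∫ z, nbLoss p θ betah z.1 z.2 ∂Q - ∫ z, nbLoss p θ betas z.1 z.2 ∂Q
        ≥ a * ∫ z, (∑ j, z.1 j * (betah j - betas j)) ^ 2 ∂Q)
    (k : ℝ) (hk0 : 0 < k) (hk1 : k < 1)
    (hstabil : ∀ b : Fin p → ℝ,
      (∑ j ∈ Hᶜ, |b j|) ≤ 3.5 * (∑ j ∈ H, |b j|) + eps / 2 →
      ∫ z, (∑ j, z.1 j * b j) ^ 2 ∂Q ≥ k * (∑ j ∈ H, (b j) ^ 2) - eps / 2) :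
    ∑ j, |betah j - betas j|
      ≤ 2.25 ^ 2 * lam1 * (H.card : ℝ) / (a * k + 2 * lam2) + (1 + a / lam1) * eps := by
  have hspl : ∀ β x y, nbLoss p θ β x y = nbLoss1 p θ β x y + nbLoss2 p θ β x := by
    intro β x y
    unfold nbLoss nbLoss1 nbLoss2
    ring
  have hI : ∀ β : Fin p → ℝ, ∫ z, nbLoss p θ β z.1 z.2 ∂Q
      = ∫ z, nbLoss1 p θ β z.1 z.2 ∂Q + ∫ z, nbLoss2 p θ β z.1 ∂Q := by
    intro β
    rw [← integral_add (hInt1 β) (hInt2 β)]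
    simp only [hspl]
  have hS : ∀ β : Fin p → ℝ, ∑ i, nbLoss p θ β (xs i) (ys i)
      = ∑ i, nbLoss1 p θ β (xs i) (ys i) + ∑ i, nbLoss2 p θ β (xs i) := by
    intro β
    rw [← Finset.sum_add_distrib]
    simp only [hspl]
  rw [integral_sub (hInt1 _) (hInt1 _), Finset.sum_sub_distrib] at hemp1
  rw [integral_sub (hInt2 _) (hInt2 _), Finset.sum_sub_distrib] at hemp2
  have hmin := hbetah betas
  have hEpos := hbetas betah
  rw [hS, hS] at hmin
  have hIs := hI betas
  have hIh := hI betah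
  set E := ∫ z, nbLoss p θ betah z.1 z.2 ∂Q - ∫ z, nbLoss p θ betas z.1 z.2 ∂Q with hE
  have hE0 : 0 ≤ E := by linarith
  set S := ∑ j ∈ H, |betah j - betas j| with hSdef
  set T := ∑ j ∈ Hᶜ, |betah j - betas j| with hTdef
  have hD : ∑ j, |betah j - betas j| = S + T := (Finset.sum_add_sum_compl H _).symm
  set G := ∑ j ∈ H, (betah j - betas j) ^ 2 with hGdef
  have hG0 : 0 ≤ G := Finset.sum_nonneg fun _ _ => sq_nonneg _
  have hpen : (lam1 * ∑ j, |betas j| + lam2 * ∑ j, (betas j) ^ 2)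
      - (lam1 * ∑ j, |betah j| + lam2 * ∑ j, (betah j) ^ 2)
      ≤ 1.25 * lam1 * S - lam2 * G - lam1 * T := by
    have e1 : (lam1 * ∑ j, |betas j| + lam2 * ∑ j, (betas j) ^ 2)
        - (lam1 * ∑ j, |betah j| + lam2 * ∑ j, (betah j) ^ 2)
        = ∑ j, (lam1 * |betas j| + lam2 * betas j ^ 2
            - (lam1 * |betah j| + lam2 * betah j ^ 2)) := by
      simp only [Finset.mul_sum, Finset.sum_add_distrib, Finset.sum_sub_distrib]
    have e2 : ∑ j ∈ H, (lam1 * |betas j| + lam2 * betas j ^ 2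
            - (lam1 * |betah j| + lam2 * betah j ^ 2)) ≤ 1.25 * lam1 * S - lam2 * G := by
      rw [hSdef, hGdef, Finset.mul_sum, Finset.mul_sum, ← Finset.sum_sub_distrib]
      refine Finset.sum_le_sum fun j _ => ?_
      have h1 : |betas j| - |betah j| ≤ |betah j - betas j| := by
        rw [abs_sub_comm]; exact abs_sub_abs_le_abs_sub _ _
      have h2 : -((betah j - betas j) * betas j) ≤ |betah j - betas j| * B := by
        calc _ ≤ |(betah j - betas j) * betas j| := neg_le_abs _
          _ = |betah j - betas j| * |betas j| := abs_mul _ _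
          _ ≤ _ := mul_le_mul_of_nonneg_left (hB j) (abs_nonneg _)
      have h3 := mul_le_mul_of_nonneg_left h1 hlam1.le
      have h4 := mul_le_mul_of_nonneg_left h2 hlam2.le
      have h5 : lam1 * |betah j - betas j| = 8 * (lam2 * (|betah j - betas j| * B)) := by
        rw [hlam12]; ring
      linarith
    have e3 : ∑ j ∈ Hᶜ, (lam1 * |betas j| + lam2 * betas j ^ 2
            - (lam1 * |betah j| + lam2 * betah j ^ 2)) ≤ - (lam1 * T) := by
      rw [hTdef, Finset.mul_sum, ← Finset.sum_neg_distrib]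
      refine Finset.sum_le_sum fun j hj => ?_
      have hz : betas j = 0 := by
        rw [hH] at hj; simpa using hj
      rw [hz]
      have := mul_nonneg hlam2.le (sq_nonneg (betah j))
      simp only [abs_zero, sub_zero]
      linarith
    rw [e1, ← Finset.sum_add_sum_compl H]
    linarith
  have hbasic : E ≤ lam1 * (1.75 * S - 0.5 * T + eps / 4) - lam2 * G := by
    rw [hD] at hemp1 hemp2
    rw [mul_sub] at hemp1 hemp2
    rw [mul_add, mul_add] at hmin
    linarith
  have hcone : T ≤ 3.5 * S + eps / 2 := by
    have h1 : 0 ≤ lam1 * (1.75 * S - 0.5 * T + eps / 4) := by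
      have := mul_nonneg hlam2.le hG0
      linarith
    have := nonneg_of_mul_nonneg_right h1 hlam1
    linarith
  have hst := mul_le_mul_of_nonneg_left (hstabil (fun j => betah j - betas j) hcone) ha.le
  have hst2 : a * (k * G - eps / 2) ≤ E := le_trans hst hquad
  have hm : 0 < a * k + 2 * lam2 := by positivity
  have hcoord : 4.5 * lam1 * S - (a * k + 2 * lam2) * G
      ≤ H.card * ((2.25 * lam1) ^ 2 / (a * k + 2 * lam2)) := by
    rw [hSdef, hGdef, Finset.mul_sum, Finset.mul_sum, ← Finset.sum_sub_distrib, ← nsmul_eq_mul]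
    refine Finset.sum_le_card_nsmul _ _ _ fun j _ => ?_
    rw [le_div_iff₀ hm, ← sq_abs (betah j - betas j)]
    nlinarith [sq_nonneg (2.25 * lam1 - (a * k + 2 * lam2) * |betah j - betas j|)]
  have hfin : lam1 * (S + T) ≤ H.card * ((2.25 * lam1) ^ 2 / (a * k + 2 * lam2))
      + (lam1 + a) * eps := by
    have h1 : 0 ≤ a * k * G := by positivity
    have h2 : 0 ≤ lam1 * eps := by positivity
    nlinarith
  rw [hD]
  refine le_of_mul_le_mul_left (hfin.trans_eq ?_) hlam1
  field_simp
end

section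
/- Assume ‖β*‖_∞ ≤ B for some B > 0, λ₁ = 8B·λ₂, and ε_n ≥ 0. Let Σ = ∫ x·xᵀ dQ(x,y) and suppose: (i) (P_n − P)(l₁(β*,·,·) − l₁(β̂,·,·)) ≤ (λ₁/4)·‖β̂ − β*‖₁ and (P_n − P)(l₂(β*,·) − l₂(β̂,·)) ≤ (λ₁/4)·(‖β̂ − β*‖₁ + ε_n); (ii) there is a > 0 with P l(β̂,·,·) − P l(β*,·,·) ≥ a·(β̂ − β*)ᵀ·Σ·(β̂ − β*); (iii) the Stabil condition holds: for every b ∈ ℝ^p with ∑_{j∉H}|b_j| ≤ 3.5·∑_{j∈H}|b_j| + ε_n/2 one has bᵀ·Σ·b ≥ k·∑_{j∈H} b_j² − ε_n/2, where 0 < k < 1. Then the prediction error satisfies (β̂ − β*)ᵀ·Σ·(β̂ − β*) ≤ 17.71875·d*·λ₁² / (a·(a·k + 2λ₂)) + (4.5·λ₁/a + 3.5)·ε_n. -/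
open Real BigOperators Finset MeasureTheory

theorem stmt12
    (n p : ℕ) (hn : 1 ≤ n) (hp : 1 ≤ p)
    (θ L : ℝ) (hθ : 0 < θ) (hL : 0 < L)
    (Q : Measure ((Fin p → ℝ) × ℝ)) [IsProbabilityMeasure Q]
    (hsupp : ∀ᵐ z ∂Q, (∀ j, |z.1 j| ≤ L) ∧ 0 ≤ z.2)
    (hInt : ∀ β : Fin p → ℝ, Integrable (fun z => nbLoss p θ β z.1 z.2) Q)
    (hInt1 : ∀ β : Fin p → ℝ, Integrable (fun z => nbLoss1 p θ β z.1 z.2) Q)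
    (hInt2 : ∀ β : Fin p → ℝ, Integrable (fun z => nbLoss2 p θ β z.1) Q)
    (xs : Fin n → Fin p → ℝ) (ys : Fin n → ℝ)
    (hxs : ∀ i j, |xs i j| ≤ L) (hys : ∀ i, 0 ≤ ys i)
    (lam1 lam2 : ℝ) (hlam1 : 0 < lam1) (hlam2 : 0 < lam2)
    (betas : Fin p → ℝ)
    (hbetas : ∀ β : Fin p → ℝ,
      ∫ z, nbLoss p θ betas z.1 z.2 ∂Q ≤ ∫ z, nbLoss p θ β z.1 z.2 ∂Q)
    (H : Finset (Fin p)) (hH : H = Finset.univ.filter (fun j => betas j ≠ 0))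
    (betah : Fin p → ℝ)
    (hbetah : ∀ β : Fin p → ℝ,
      (1 / (n : ℝ)) * (∑ i, nbLoss p θ betah (xs i) (ys i))
          + lam1 * ∑ j, |betah j| + lam2 * ∑ j, (betah j) ^ 2
        ≤ (1 / (n : ℝ)) * (∑ i, nbLoss p θ β (xs i) (ys i))
          + lam1 * ∑ j, |β j| + lam2 * ∑ j, (β j) ^ 2)
    (B : ℝ) (hBpos : 0 < B) (hB : ∀ j, |betas j| ≤ B)
    (hlam12 : lam1 = 8 * B * lam2)
    (eps : ℝ) (heps : 0 ≤ eps)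
    (hemp1 : (1 / (n : ℝ)) * (∑ i, (nbLoss1 p θ betas (xs i) (ys i)
            - nbLoss1 p θ betah (xs i) (ys i)))
          - ∫ z, (nbLoss1 p θ betas z.1 z.2 - nbLoss1 p θ betah z.1 z.2) ∂Q
        ≤ lam1 / 4 * ∑ j, |betah j - betas j|)
    (hemp2 : (1 / (n : ℝ)) * (∑ i, (nbLoss2 p θ betas (xs i)
            - nbLoss2 p θ betah (xs i)))
          - ∫ z, (nbLoss2 p θ betas z.1 - nbLoss2 p θ betah z.1) ∂Q
        ≤ lam1 / 4 * ((∑ j, |betah j - betas j|) + eps))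
    (a : ℝ) (ha : 0 < a)
    (hquad : ∫ z, nbLoss p θ betah z.1 z.2 ∂Q - ∫ z, nbLoss p θ betas z.1 z.2 ∂Q
        ≥ a * ∫ z, (∑ j, z.1 j * (betah j - betas j)) ^ 2 ∂Q)
    (k : ℝ) (hk0 : 0 < k) (hk1 : k < 1)
    (hstabil : ∀ b : Fin p → ℝ,
      (∑ j ∈ Hᶜ, |b j|) ≤ 3.5 * (∑ j ∈ H, |b j|) + eps / 2 →
      ∫ z, (∑ j, z.1 j * b j) ^ 2 ∂Q ≥ k * (∑ j ∈ H, (b j) ^ 2) - eps / 2) :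
    ∫ z, (∑ j, z.1 j * (betah j - betas j)) ^ 2 ∂Q
      ≤ 17.71875 * (H.card : ℝ) * lam1 ^ 2 / (a * (a * k + 2 * lam2))
        + (4.5 * lam1 / a + 3.5) * eps := by
  have hsplit : ∀ β x y, nbLoss p θ β x y = nbLoss1 p θ β x y + nbLoss2 p θ β x := by
    intro β x y
    unfold nbLoss nbLoss1 nbLoss2
    ring
  have hPs : ∀ β : Fin p → ℝ, ∫ z, nbLoss p θ β z.1 z.2 ∂Q
      = ∫ z, nbLoss1 p θ β z.1 z.2 ∂Q + ∫ z, nbLoss2 p θ β z.1 ∂Q := by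
    intro β
    rw [← integral_add (hInt1 β) (hInt2 β)]
    simp only [hsplit]
  rw [integral_sub (hInt1 _) (hInt1 _), Finset.sum_sub_distrib] at hemp1
  rw [integral_sub (hInt2 _) (hInt2 _), Finset.sum_sub_distrib] at hemp2
  have hmin := hbetah betas
  simp only [hsplit, Finset.sum_add_distrib] at hmin
  rw [hPs, hPs] at hquad
  have hst := hstabil (fun j => betah j - betas j)
  have hsum1 : ∑ j, |betah j - betas j|
      = ∑ j ∈ H, |betah j - betas j| + ∑ j ∈ Hᶜ, |betah j - betas j| :=
    (Finset.sum_add_sum_compl H _).symm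
  have hzero : ∀ j ∈ Hᶜ, betas j = 0 := by
    intro j hj
    simpa [hH] using hj
  -- penalty differences
  have hpenH : ∑ j ∈ H, (lam1 * |betas j| + lam2 * betas j ^ 2
        - (lam1 * |betah j| + lam2 * betah j ^ 2))
      ≤ ∑ j ∈ H, (5 / 4 * lam1 * |betah j - betas j| - lam2 * (betah j - betas j) ^ 2) := by
    apply Finset.sum_le_sum
    intro j _
    have h1 : |betas j| - |betah j| ≤ |betah j - betas j| := by
      rw [abs_sub_comm]
      exact abs_sub_abs_le_abs_sub _ _
    have h2 : -(betas j * (betah j - betas j)) ≤ B * |betah j - betas j| := by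
      calc -(betas j * (betah j - betas j)) ≤ |betas j * (betah j - betas j)| := neg_le_abs _
        _ = |betas j| * |betah j - betas j| := abs_mul _ _
        _ ≤ _ := mul_le_mul_of_nonneg_right (hB j) (abs_nonneg _)
    have h3 := mul_le_mul_of_nonneg_left h1 hlam1.le
    have h4 := mul_le_mul_of_nonneg_left h2 hlam2.le
    have h5 : lam1 * |betah j - betas j| = 8 * (lam2 * (B * |betah j - betas j|)) := by
      rw [hlam12]; ring
    nlinarith
  have hpenC : ∑ j ∈ Hᶜ, (lam1 * |betas j| + lam2 * betas j ^ 2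
        - (lam1 * |betah j| + lam2 * betah j ^ 2))
      ≤ ∑ j ∈ Hᶜ, (-lam1 * |betah j - betas j|) := by
    apply Finset.sum_le_sum
    intro j hj
    rw [hzero j hj]
    simp only [abs_zero, sub_zero]
    nlinarith [mul_nonneg hlam2.le (sq_nonneg (betah j))]
  have hpen := add_le_add hpenH hpenC
  rw [Finset.sum_add_sum_compl] at hpen
  simp only [Finset.sum_sub_distrib, Finset.sum_add_distrib, ← Finset.mul_sum] at hpen
  have hc : 0 < a * k + 2 * lam2 := by positivity
  have hyoung : ∑ j ∈ H, (3.5 * lam1 * |betah j - betas j|)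
      ≤ ∑ j ∈ H, ((a * k + 2 * lam2) * (betah j - betas j) ^ 2
        + 3.0625 * lam1 ^ 2 / (a * k + 2 * lam2)) := by
    apply Finset.sum_le_sum
    intro j _
    rw [← sq_abs (betah j - betas j)]
    generalize |betah j - betas j| = u
    generalize a * k + 2 * lam2 = c at hc
    have : c * u ^ 2 + 3.0625 * lam1 ^ 2 / c - 3.5 * lam1 * u = (c * u - 1.75 * lam1) ^ 2 / c := by
      field_simp
      ring
    have h2 : 0 ≤ (c * u - 1.75 * lam1) ^ 2 / c := by positivity
    linarith
  simp only [Finset.sum_add_distrib, ← Finset.mul_sum, Finset.sum_const, nsmul_eq_mul] at hyoung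
  have hV0 : 0 ≤ ∫ z, (∑ j, z.1 j * (betah j - betas j)) ^ 2 ∂Q :=
    integral_nonneg fun z => sq_nonneg _
  have hS20 : 0 ≤ ∑ j ∈ H, (betah j - betas j) ^ 2 := Finset.sum_nonneg fun _ _ => sq_nonneg _
  have hT0 : 0 ≤ ∑ j ∈ Hᶜ, |betah j - betas j| := Finset.sum_nonneg fun _ _ => abs_nonneg _
  rw [hsum1] at hemp1 hemp2
  generalize ∫ z, (∑ j, z.1 j * (betah j - betas j)) ^ 2 ∂Q = V at *
  generalize ∑ j ∈ H, (betah j - betas j) ^ 2 = S2 at *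
  generalize ∑ j ∈ Hᶜ, |betah j - betas j| = T at *
  generalize ∑ j ∈ H, |betah j - betas j| = S at *
  have key : a * V + lam2 * S2 ≤ lam1 * (7 / 4 * S - 1 / 2 * T + eps / 4) := by
    linarith
  have haV : 0 ≤ a * V := mul_nonneg ha.le hV0
  have hlS : 0 ≤ lam2 * S2 := mul_nonneg hlam2.le hS20
  have hcone : T ≤ 3.5 * S + eps / 2 := by
    have h : 0 ≤ 7 / 4 * S - 1 / 2 * T + eps / 4 := by
      by_contra hneg
      push Not at hneg
      have := mul_neg_of_pos_of_neg hlam1 hneg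
      linarith
    linarith
  have hst2 := mul_le_mul_of_nonneg_left (hst hcone) ha.le
  have hlT : 0 ≤ lam1 * T := mul_nonneg hlam1.le hT0
  have hfin : a * V ≤ (H.card : ℝ) * (3.0625 * lam1 ^ 2 / (a * k + 2 * lam2))
      + (lam1 + a) / 2 * eps := by
    linarith
  have hX : 0 ≤ (H.card : ℝ) * (lam1 ^ 2 / (a * k + 2 * lam2)) := by positivity
  have hle : 0 ≤ lam1 * eps := mul_nonneg hlam1.le heps
  have hae : 0 ≤ a * eps := mul_nonneg ha.le heps
  have hgoal : 17.71875 * (H.card : ℝ) * lam1 ^ 2 / (a * (a * k + 2 * lam2))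
        + (4.5 * lam1 / a + 3.5) * eps
      = (17.71875 * ((H.card : ℝ) * (lam1 ^ 2 / (a * k + 2 * lam2)))
        + (4.5 * lam1 + 3.5 * a) * eps) / a := by
    field_simp
  rw [hgoal, le_div_iff₀ ha]
  have hre : (H.card : ℝ) * (3.0625 * lam1 ^ 2 / (a * k + 2 * lam2))
      = 3.0625 * ((H.card : ℝ) * (lam1 ^ 2 / (a * k + 2 * lam2))) := by ring
  rw [hre] at hfin
  linarith
end

section
/- Let β̂ be the elastic-net estimator with λ₂ > 0. Then for any k, l ∈ {1,…,p}: |β̂_k − β̂_l| ≤ (1/(2nλ₂))·∑_{i=1}^n θ·|x_{ik} − x_{il}|·|exp(⟨X_i,β̂⟩) − y_i| / (θ + exp(⟨X_i,β̂⟩)). -/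
open Real BigOperators Finset MeasureTheory

lemma sum_swap_aux {p : ℕ} (u v : Fin p → ℝ) (k l : Fin p) (hkl : k ≠ l) :
    ∑ j, u j * (v (Equiv.swap k l j) - v j) = (u k - u l) * (v l - v k) := by
  rw [Fintype.sum_eq_add k l hkl]
  · rw [Equiv.swap_apply_left, Equiv.swap_apply_right]; ring
  · rintro j ⟨h1, h2⟩
    rw [Equiv.swap_apply_of_ne_of_ne h1 h2]; ring

lemma deriv_nonneg_aux_s14 (G : ℝ → ℝ) (D : ℝ) (hG : HasDerivAt G D 0)
    (h : ∀ s, 0 ≤ s → s ≤ 1 → G 0 ≤ G s) : 0 ≤ D := by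
  refine ge_of_tendsto hG.tendsto_slope_zero_right ?_
  filter_upwards [Ioo_mem_nhdsGT (zero_lt_one (α := ℝ))] with s hs
  have := h s hs.1.le hs.2.le
  have h0 : 0 ≤ s⁻¹ := inv_nonneg.2 hs.1.le
  rw [zero_add, smul_eq_mul]
  exact mul_nonneg h0 (by linarith)

lemma deriv_term_aux (θ y a c : ℝ) (hθ : 0 < θ) :
    HasDerivAt (fun s : ℝ => y * (a + s * c) - (θ + y) * Real.log (θ + Real.exp (a + s * c)))
      (-(θ * (Real.exp a - y) / (θ + Real.exp a) * c)) 0 := by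
  have h1 : HasDerivAt (fun s : ℝ => a + s * c) c 0 := by
    simpa using ((hasDerivAt_id (0 : ℝ)).mul_const c).const_add a
  have hpos : θ + Real.exp a ≠ 0 := by positivity
  have h2 := (h1.exp.const_add θ).log (by simpa using hpos)
  have h3 := (h1.const_mul y).sub (h2.const_mul (θ + y))
  refine h3.congr_deriv ?_
  simp only [zero_mul, add_zero]
  field_simp
  ring

theorem stmt14
    (n p : ℕ) (hn : 1 ≤ n) (hp : 1 ≤ p)
    (θ : ℝ) (hθ : 0 < θ)
    (x : Fin n → Fin p → ℝ) (y : Fin n → ℝ) (hy : ∀ i, 0 ≤ y i)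
    (lam1 lam2 : ℝ) (hlam1 : 0 < lam1) (hlam2 : 0 < lam2)
    (betah : Fin p → ℝ)
    (hmin : ∀ β : Fin p → ℝ,
      enObj n p θ x y lam1 lam2 betah ≤ enObj n p θ x y lam1 lam2 β)
    (k l : Fin p) :
    |betah k - betah l| ≤ (1 / (2 * n * lam2)) *
      ∑ i, θ * |x i k - x i l| * |Real.exp (dotp (x i) betah) - y i|
        / (θ + Real.exp (dotp (x i) betah)) := by
  by_cases hab : betah k = betah l
  · rw [hab, sub_self, abs_zero]
    refine mul_nonneg (by positivity) (Finset.sum_nonneg fun i _ => ?_)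
    positivity
  have hkl : k ≠ l := fun h => hab (by rw [h])
  have hn0 : (0 : ℝ) < n := by exact_mod_cast hn
  set d : Fin p → ℝ := fun j => betah (Equiv.swap k l j) - betah j with hd
  have hdot : ∀ i (s : ℝ), dotp (x i) (fun j => betah j + s * d j)
      = dotp (x i) betah + s * ((x i k - x i l) * (betah l - betah k)) := by
    intro i s
    rw [← sum_swap_aux (x i) betah k l hkl]
    simp only [dotp]
    rw [Finset.mul_sum, ← Finset.sum_add_distrib]
    refine Finset.sum_congr rfl fun j _ => ?_
    simp only [hd]; ring
  have habs : ∀ s : ℝ, 0 ≤ s → s ≤ 1 → ∑ j, |betah j + s * d j| ≤ ∑ j, |betah j| := by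
    intro s h0 h1
    have hs : ∑ j, |betah (Equiv.swap k l j)| = ∑ j, |betah j| :=
      Equiv.sum_comp (Equiv.swap k l) (fun j => |betah j|)
    calc ∑ j, |betah j + s * d j|
        ≤ ∑ j, ((1 - s) * |betah j| + s * |betah (Equiv.swap k l j)|) := by
          refine Finset.sum_le_sum fun j _ => ?_
          have e : betah j + s * d j = (1 - s) * betah j + s * betah (Equiv.swap k l j) := by
            simp only [hd]; ring
          rw [e]
          refine (abs_add_le _ _).trans ?_
          rw [abs_mul, abs_mul, abs_of_nonneg h0, abs_of_nonneg (sub_nonneg.2 h1)]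
      _ = ∑ j, |betah j| := by
          rw [Finset.sum_add_distrib, ← Finset.mul_sum, ← Finset.mul_sum, hs]; ring
  have hsq : HasDerivAt (fun s : ℝ => ∑ j, (betah j + s * d j) ^ 2)
      (-2 * (betah k - betah l) ^ 2) 0 := by
    have h : ∀ j ∈ (Finset.univ : Finset (Fin p)),
        HasDerivAt (fun s : ℝ => (betah j + s * d j) ^ 2) (2 * (betah j * d j)) 0 := by
      intro j _
      have h1 : HasDerivAt (fun s : ℝ => betah j + s * d j) (d j) 0 := by
        simpa using ((hasDerivAt_id (0 : ℝ)).mul_const (d j)).const_add (betah j)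
      refine (h1.fun_pow 2).congr_deriv ?_
      simp; ring
    refine (HasDerivAt.fun_sum h).congr_deriv ?_
    rw [← Finset.mul_sum, sum_swap_aux betah betah k l hkl]; ring
  have hlik := (HasDerivAt.fun_sum (u := (Finset.univ : Finset (Fin n))) fun i _ =>
    deriv_term_aux θ (y i) (dotp (x i) betah)
      ((x i k - x i l) * (betah l - betah k)) hθ).const_mul (-(1 / (n : ℝ)))
  have hD := deriv_nonneg_aux_s14 _ _ (hlik.add (hsq.const_mul lam2)) (by
    intro s h0 h1
    have hm := hmin (fun j => betah j + s * d j)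
    have ha := mul_le_mul_of_nonneg_left (habs s h0 h1) hlam1.le
    simp only [enObj, negLogLik, hdot] at hm
    simp only [Pi.add_apply, zero_mul, add_zero]
    linarith)
  set S := ∑ i, θ * |x i k - x i l| * |Real.exp (dotp (x i) betah) - y i|
        / (θ + Real.exp (dotp (x i) betah)) with hS
  have hbound : ∑ i, (θ * (Real.exp (dotp (x i) betah) - y i) / (θ + Real.exp (dotp (x i) betah))
      * ((x i k - x i l) * (betah l - betah k))) ≤ |betah k - betah l| * S := by
    rw [hS, Finset.mul_sum]
    refine Finset.sum_le_sum fun i _ => (le_abs_self _).trans (le_of_eq ?_)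
    have hpos : 0 < θ + Real.exp (dotp (x i) betah) := by positivity
    rw [abs_mul, abs_div, abs_mul, abs_mul, abs_of_pos hθ, abs_of_pos hpos,
      abs_sub_comm (betah l) (betah k)]
    ring
  rw [Finset.sum_neg_distrib] at hD
  have hA : 0 < |betah k - betah l| := abs_pos.2 (sub_ne_zero.2 hab)
  rw [← sq_abs (betah k - betah l)] at hD
  set A := |betah k - betah l|
  have h1 := mul_le_mul_of_nonneg_left hbound (by positivity : (0 : ℝ) ≤ 1 / n)
  have h2 : A * (2 * lam2 * A) ≤ A * (1 / n * S) := by linarith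
  have h3 := le_of_mul_le_mul_left h2 hA
  have e : 1 / (2 * n * lam2) * S = (1 / n * S) / (2 * lam2) := by
    field_simp
  rw [e, le_div_iff₀ (by positivity)]
  linarith
end

section
/- Let β̂ be the elastic-net estimator with λ₂ > 0, and let k, l ∈ {1,…,p} be such that (1/n)·∑_{i=1}^n x_{ik}² = 1 and (1/n)·∑_{i=1}^n x_{il}² = 1. With ρ_{kl} = (1/n)·∑_{i=1}^n x_{ik}·x_{il}, one has |β̂_k − β̂_l|² ≤ ((1 − ρ_{kl})/(2λ₂²)) · (1/n)·∑_{i=1}^n (exp(⟨X_i,β̂⟩) − y_i)². -/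
open Real BigOperators Finset MeasureTheory

open Filter Topology in
theorem key_aux
    (n p : ℕ)
    (θ : ℝ) (hθ : 0 < θ)
    (x : Fin n → Fin p → ℝ) (y : Fin n → ℝ)
    (lam1 lam2 : ℝ) (hlam1 : 0 < lam1)
    (b : Fin p → ℝ)
    (hmin : ∀ β : Fin p → ℝ,
      enObj n p θ x y lam1 lam2 b ≤ enObj n p θ x y lam1 lam2 β)
    (k l : Fin p) (hlt : b l < b k) :
    2 * lam2 * (b k - b l) ≤ (1 / (n : ℝ)) * ∑ i,
      (θ * (Real.exp (dotp (x i) b) - y i) / (θ + Real.exp (dotp (x i) b))) *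
        (x i l - x i k) := by
  have hkl : k ≠ l := by rintro rfl; exact lt_irrefl _ hlt
  let B : ℝ → Fin p → ℝ := fun t j => b j + t * ((Pi.single l 1 : Fin p → ℝ) j - (Pi.single k 1 : Fin p → ℝ) j)
  have hBk : ∀ t, B t k = b k - t := by
    intro t; simp [B, hkl]; ring
  have hBl : ∀ t, B t l = b l + t := by
    intro t; simp [B, hkl.symm]
  have hBo : ∀ t j, j ≠ k ∧ j ≠ l → B t j = b j := by
    intro t j hj; simp [B, hj.1, hj.2]
  have hdot : ∀ t i, dotp (x i) (B t) = dotp (x i) b + t * (x i l - x i k) := by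
    intro t i
    rw [← sub_eq_iff_eq_add']
    unfold dotp
    rw [← Finset.sum_sub_distrib, Fintype.sum_eq_add k l hkl, hBk, hBl]
    · ring
    · intro j hj; rw [hBo t j hj]; ring
  have hsq : ∀ t, ∑ j, (B t j) ^ 2 = ∑ j, (b j) ^ 2 + (2 * t * (b l - b k) + 2 * t ^ 2) := by
    intro t
    rw [← sub_eq_iff_eq_add', ← Finset.sum_sub_distrib, Fintype.sum_eq_add k l hkl, hBk, hBl]
    · ring
    · intro j hj; rw [hBo t j hj]; ring
  have habs : ∀ t, 0 ≤ t → t ≤ b k - b l → ∑ j, |B t j| ≤ ∑ j, |b j| := by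
    intro t h0 h1
    rw [← sub_nonpos, ← Finset.sum_sub_distrib, Fintype.sum_eq_add k l hkl, hBk, hBl]
    · have e1 := abs_le.1 (le_refl |b k|)
      have e2 := abs_le.1 (le_refl |b l|)
      rcases abs_cases (b k - t) with h | h <;> rcases abs_cases (b l + t) with h' | h' <;>
        rcases abs_cases (b k) with h2 | h2 <;> rcases abs_cases (b l) with h3 | h3 <;> linarith
    · intro j hj; rw [hBo t j hj]; ring
  let φ : ℝ → ℝ := fun t => -(1 / (n : ℝ)) *
    ∑ i, (y i * (dotp (x i) b + t * (x i l - x i k)) -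
      (θ + y i) * Real.log (θ + Real.exp (dotp (x i) b + t * (x i l - x i k)))) +
      lam2 * (2 * t * (b l - b k) + 2 * t ^ 2)
  have hφ : ∀ t, 0 ≤ t → t ≤ b k - b l → φ 0 ≤ φ t := by
    intro t h0 h1
    have h := hmin (B t)
    have h2 := mul_le_mul_of_nonneg_left (habs t h0 h1) hlam1.le
    unfold enObj negLogLik at h
    simp only [hdot, hsq] at h
    simp only [φ, zero_mul, add_zero, mul_zero]
    linarith
  have hd : HasDerivAt φ (-(1 / (n : ℝ)) *
    ∑ i, (y i * (x i l - x i k) -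
      (θ + y i) * (Real.exp (dotp (x i) b) * (x i l - x i k) / (θ + Real.exp (dotp (x i) b)))) +
      lam2 * (2 * (b l - b k))) 0 := by
    apply HasDerivAt.add
    · apply HasDerivAt.const_mul
      apply HasDerivAt.fun_sum
      intro i _
      have hlin : HasDerivAt (fun t : ℝ => dotp (x i) b + t * (x i l - x i k)) (x i l - x i k) 0 := by
        simpa using ((hasDerivAt_id (0:ℝ)).mul_const (x i l - x i k)).const_add (dotp (x i) b)
      apply HasDerivAt.sub
      · exact hlin.const_mul _
      · apply HasDerivAt.const_mul
        have := (hlin.exp.const_add θ).log (by positivity)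
        simpa using this
    · apply HasDerivAt.const_mul
      have h1 := (((hasDerivAt_id (0:ℝ)).const_mul 2).mul_const (b l - b k)).add
        (((hasDerivAt_id (0:ℝ)).pow 2).const_mul 2)
      have h2 := h1.congr_deriv (g' := 2 * (b l - b k)) (by simp)
      exact h2
  have hnn := ge_of_tendsto (b := (0:ℝ)) hd.tendsto_slope_zero_right (by
    have : Set.Ioo 0 (b k - b l) ∈ 𝓝[>] (0:ℝ) := Ioo_mem_nhdsGT (by linarith)
    filter_upwards [this] with t ht
    have := hφ t ht.1.le ht.2.le
    have h3 := ht.1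
    rw [zero_add, smul_eq_mul]
    exact mul_nonneg (by positivity) (by linarith))
  have hs : ∑ i, (y i * (x i l - x i k) -
      (θ + y i) * (Real.exp (dotp (x i) b) * (x i l - x i k) / (θ + Real.exp (dotp (x i) b))))
      = - ∑ i, (θ * (Real.exp (dotp (x i) b) - y i) / (θ + Real.exp (dotp (x i) b))) *
        (x i l - x i k) := by
    rw [← Finset.sum_neg_distrib]
    apply Finset.sum_congr rfl
    intro i _
    have : θ + Real.exp (dotp (x i) b) ≠ 0 := by positivity
    field_simp
    ring
  rw [hs] at hnn
  linarith

theorem key_bound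
    (n p : ℕ) (hn : 1 ≤ n)
    (θ : ℝ) (hθ : 0 < θ)
    (x : Fin n → Fin p → ℝ) (y : Fin n → ℝ)
    (lam1 lam2 : ℝ) (hlam1 : 0 < lam1) (hlam2 : 0 < lam2)
    (b : Fin p → ℝ)
    (hmin : ∀ β : Fin p → ℝ,
      enObj n p θ x y lam1 lam2 b ≤ enObj n p θ x y lam1 lam2 β)
    (k l : Fin p) (hlt : b l < b k)
    (hknorm : (1 / (n : ℝ)) * ∑ i, (x i k) ^ 2 = 1)
    (hlnorm : (1 / (n : ℝ)) * ∑ i, (x i l) ^ 2 = 1)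
    (ρ : ℝ) (hρ : ρ = (1 / (n : ℝ)) * ∑ i, x i k * x i l) :
    (b k - b l) ^ 2 ≤ ((1 - ρ) / (2 * lam2 ^ 2)) *
      ((1 / (n : ℝ)) * ∑ i, (Real.exp (dotp (x i) b) - y i) ^ 2) := by
  have hk := key_aux n p θ hθ x y lam1 lam2 hlam1 b hmin k l hlt
  set g : Fin n → ℝ :=
    fun i => θ * (Real.exp (dotp (x i) b) - y i) / (θ + Real.exp (dotp (x i) b)) with hg
  have hn0 : (0:ℝ) < n := by exact_mod_cast hn
  have hcs := Finset.sum_mul_sq_le_sq_mul_sq Finset.univ g (fun i => x i l - x i k)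
  have hX : (1 / (n : ℝ)) * ∑ i, (x i l - x i k) ^ 2 = 2 * (1 - ρ) := by
    have : ∑ i, (x i l - x i k) ^ 2
        = ∑ i, (x i l) ^ 2 + ∑ i, (x i k) ^ 2 - 2 * ∑ i, x i k * x i l := by
      rw [Finset.mul_sum, ← Finset.sum_add_distrib, ← Finset.sum_sub_distrib]
      exact Finset.sum_congr rfl fun i _ => by ring
    rw [this, hρ]
    linarith
  have hρ1 : 0 ≤ 1 - ρ := by
    have : 0 ≤ (1 / (n : ℝ)) * ∑ i, (x i l - x i k) ^ 2 := by positivity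
    linarith
  have hgle : ∑ i, g i ^ 2 ≤ ∑ i, (Real.exp (dotp (x i) b) - y i) ^ 2 := by
    apply Finset.sum_le_sum
    intro i _
    have he := Real.exp_pos (dotp (x i) b)
    have : g i = (θ / (θ + Real.exp (dotp (x i) b))) * (Real.exp (dotp (x i) b) - y i) := by
      simp only [hg]; ring
    rw [this, mul_pow]
    have h1 : θ / (θ + Real.exp (dotp (x i) b)) ≤ 1 := by
      rw [div_le_one (by positivity)]; linarith
    exact mul_le_of_le_one_left (sq_nonneg _) (pow_le_one₀ (by positivity) h1)
  have h4 : (2 * lam2 * (b k - b l)) ^ 2 ≤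
      ((1 / (n : ℝ)) * ∑ i, (Real.exp (dotp (x i) b) - y i) ^ 2) * (2 * (1 - ρ)) := by
    calc (2 * lam2 * (b k - b l)) ^ 2
        ≤ ((1 / (n : ℝ)) * ∑ i, g i * (x i l - x i k)) ^ 2 := by
          apply pow_le_pow_left₀ _ hk
          have : 0 < b k - b l := by linarith
          positivity
      _ = (1 / (n : ℝ)) ^ 2 * (∑ i, g i * (x i l - x i k)) ^ 2 := by ring
      _ ≤ (1 / (n : ℝ)) ^ 2 * ((∑ i, g i ^ 2) * ∑ i, (x i l - x i k) ^ 2) := by gcongr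
      _ = ((1 / (n : ℝ)) * ∑ i, g i ^ 2) * ((1 / (n : ℝ)) * ∑ i, (x i l - x i k) ^ 2) := by ring
      _ = ((1 / (n : ℝ)) * ∑ i, g i ^ 2) * (2 * (1 - ρ)) := by rw [hX]
      _ ≤ _ := by gcongr
  rw [div_mul_eq_mul_div, le_div_iff₀ (by positivity)]
  linarith

theorem stmt15
    (n p : ℕ) (hn : 1 ≤ n) (hp : 1 ≤ p)
    (θ : ℝ) (hθ : 0 < θ)
    (x : Fin n → Fin p → ℝ) (y : Fin n → ℝ) (hy : ∀ i, 0 ≤ y i)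
    (lam1 lam2 : ℝ) (hlam1 : 0 < lam1) (hlam2 : 0 < lam2)
    (betah : Fin p → ℝ)
    (hmin : ∀ β : Fin p → ℝ,
      enObj n p θ x y lam1 lam2 betah ≤ enObj n p θ x y lam1 lam2 β)
    (k l : Fin p)
    (hknorm : (1 / (n : ℝ)) * ∑ i, (x i k) ^ 2 = 1)
    (hlnorm : (1 / (n : ℝ)) * ∑ i, (x i l) ^ 2 = 1)
    (ρ : ℝ) (hρ : ρ = (1 / (n : ℝ)) * ∑ i, x i k * x i l) :
    |betah k - betah l| ^ 2 ≤ ((1 - ρ) / (2 * lam2 ^ 2)) *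
      ((1 / (n : ℝ)) * ∑ i, (Real.exp (dotp (x i) betah) - y i) ^ 2) := by
  rw [sq_abs]
  rcases lt_trichotomy (betah l) (betah k) with h | h | h
  · exact key_bound n p hn θ hθ x y lam1 lam2 hlam1 hlam2 betah hmin k l h hknorm hlnorm ρ hρ
  · have hX : (1 / (n : ℝ)) * ∑ i, (x i l - x i k) ^ 2 = 2 * (1 - ρ) := by
      have : ∑ i, (x i l - x i k) ^ 2
          = ∑ i, (x i l) ^ 2 + ∑ i, (x i k) ^ 2 - 2 * ∑ i, x i k * x i l := by
        rw [Finset.mul_sum, ← Finset.sum_add_distrib, ← Finset.sum_sub_distrib]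
        exact Finset.sum_congr rfl fun i _ => by ring
      rw [this, hρ]
      linarith
    have hρ1 : 0 ≤ 1 - ρ := by
      have : 0 ≤ (1 / (n : ℝ)) * ∑ i, (x i l - x i k) ^ 2 := by positivity
      linarith
    have : (betah k - betah l) ^ 2 = 0 := by rw [h]; ring
    rw [this]
    positivity
  · have := key_bound n p hn θ hθ x y lam1 lam2 hlam1 hlam2 betah hmin l k h hlnorm hknorm ρ
      (by rw [hρ]; simp only [mul_comm])
    rwa [show (betah k - betah l) ^ 2 = (betah l - betah k) ^ 2 by ring]
end

section
/- Let θ > 0 and L, B > 0, and let Y_1,…,Y_n be random variables with Y_i distributed as NB(μ_i, θ) where exp(−LB) ≤ μ_i ≤ exp(LB) for each i. Then: (1) E[ (1/n)·∑_{i=1}^n (Y_i − E Y_i)² ] ≤ e^{LB}·(θ + e^{LB})/θ; and (2) for every i, Var( (Y_i − E Y_i)² ) ≤ (2 + 6/θ)·( e^{LB}·(θ + e^{LB})/θ )² + e^{LB}·(θ + e^{LB})/θ. -/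
open Real BigOperators Finset MeasureTheory ProbabilityTheory

/-- The negative binomial distribution `NB(μ,θ)` on `ℝ` (supported on `ℕ`),
with mass function `Γ(θ+m)/(Γ(θ)·m!)·(θ/(θ+μ))^θ·(μ/(θ+μ))^m` at `m : ℕ`. -/
noncomputable def nbMeasure (θ mu : ℝ) : Measure ℝ :=
  Measure.sum fun m : ℕ =>
    (ENNReal.ofReal (Real.Gamma (θ + m) / (Real.Gamma θ * (Nat.factorial m : ℝ)) *
        (θ / (θ + mu)) ^ (θ : ℝ) * (mu / (θ + mu)) ^ m)) •
      Measure.dirac (m : ℝ)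

/-- Weights of the negative binomial distribution. -/
noncomputable def nbW (θ mu : ℝ) (m : ℕ) : ℝ :=
  Real.Gamma (θ + m) / (Real.Gamma θ * (Nat.factorial m : ℝ)) *
        (θ / (θ + mu)) ^ (θ : ℝ) * (mu / (θ + mu)) ^ m

lemma nbW_pos {θ mu : ℝ} (hθ : 0 < θ) (hmu : 0 < mu) (m : ℕ) : 0 < nbW θ mu m := by
  unfold nbW
  have h1 : 0 < Real.Gamma (θ + m) := Real.Gamma_pos_of_pos (by positivity)
  have h2 : 0 < Real.Gamma θ := Real.Gamma_pos_of_pos hθ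
  positivity

lemma nbW_succ {θ mu : ℝ} (hθ : 0 < θ) (hmu : 0 < mu) (m : ℕ) :
    nbW θ mu (m + 1) * ((m : ℝ) + 1) = mu / (θ + mu) * (θ + m) * nbW θ mu m := by
  unfold nbW
  have h2 : 0 < Real.Gamma θ := Real.Gamma_pos_of_pos hθ
  have h3 : Real.Gamma (θ + ((m + 1 : ℕ) : ℝ)) = (θ + m) * Real.Gamma (θ + m) := by
    rw [← Real.Gamma_add_one (by positivity)]
    push_cast
    ring_nf
  rw [h3, Nat.factorial_succ]
  push_cast
  have h4 : (Nat.factorial m : ℝ) ≠ 0 := by positivity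
  have h5 : (m : ℝ) + 1 ≠ 0 := by positivity
  have h6 := h2.ne'
  rw [pow_succ]
  generalize (θ / (θ + mu)) ^ (θ : ℝ) = A
  generalize mu / (θ + mu) = q
  field_simp

lemma nbW_summable {θ mu : ℝ} (hθ : 0 < θ) (hmu : 0 < mu) (k : ℕ) :
    Summable (fun m : ℕ => nbW θ mu m * (m : ℝ) ^ k) := by
  have key : Summable (fun m : ℕ => nbW θ mu m * ((m : ℝ) + 1) ^ k) := by
    have hq : mu / (θ + mu) < 1 := by
      rw [div_lt_one (by positivity)]
      linarith
    refine summable_of_ratio_test_tendsto_lt_one hq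
      (Filter.Eventually.of_forall fun m => ?_) ?_
    · have := nbW_pos hθ hmu m
      positivity
    · have hinv : Filter.Tendsto (fun m : ℕ => 1 / ((m : ℝ) + 1)) Filter.atTop (nhds 0) :=
        tendsto_one_div_add_atTop_nhds_zero_nat
      have hlim : Filter.Tendsto (fun m : ℕ => mu / (θ + mu) *
          (1 + (θ - 1) * (1 / ((m : ℝ) + 1))) * (1 + 1 / ((m : ℝ) + 1)) ^ k)
          Filter.atTop (nhds (mu / (θ + mu) * (1 + (θ - 1) * 0) * (1 + 0) ^ k)) :=
        (((hinv.const_mul (θ - 1)).const_add 1).const_mul _).mul ((hinv.const_add 1).pow k)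
      have e : mu / (θ + mu) * (1 + (θ - 1) * 0) * (1 + 0) ^ k = mu / (θ + mu) := by simp
      rw [e] at hlim
      refine hlim.congr fun m => ?_
      have p0 := nbW_pos hθ hmu m
      have p1 := nbW_pos hθ hmu (m + 1)
      rw [Real.norm_of_nonneg (by positivity), Real.norm_of_nonneg (by positivity)]
      have hs := nbW_succ hθ hmu m
      have h5 : (m : ℝ) + 1 ≠ 0 := by positivity
      have hs' : nbW θ mu (m + 1) = mu / (θ + mu) * (θ + m) * nbW θ mu m / ((m : ℝ) + 1) := by
        rw [← hs]
        field_simp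
      rw [hs']
      have a1 : 1 + 1 / ((m : ℝ) + 1) = ((m : ℝ) + 1 + 1) / ((m : ℝ) + 1) := by
        field_simp
      rw [a1, div_pow]
      push_cast
      generalize mu / (θ + mu) = q
      field_simp
      ring
  refine Summable.of_nonneg_of_le (fun m => ?_) (fun m => ?_) key
  · have := nbW_pos hθ hmu m
    positivity
  · have := nbW_pos hθ hmu m
    gcongr
    linarith

/-- Raw moments. -/
noncomputable def nbM (θ mu : ℝ) (k : ℕ) : ℝ := ∑' m : ℕ, nbW θ mu m * (m : ℝ) ^ k

lemma nbM_hasSum {θ mu : ℝ} (hθ : 0 < θ) (hmu : 0 < mu) (k : ℕ) :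
    HasSum (fun m : ℕ => nbW θ mu m * (m : ℝ) ^ k) (nbM θ mu k) :=
  (nbW_summable hθ hmu k).hasSum

lemma nbM_rec {θ mu : ℝ} (hθ : 0 < θ) (hmu : 0 < mu) (k : ℕ) (S : ℝ)
    (hS : HasSum (fun m : ℕ => nbW θ mu m * (((m : ℝ) + 1) ^ k * (θ + m))) S) :
    (θ + mu) * nbM θ mu (k + 1) = mu * S := by
  have h1 := (hasSum_nat_add_iff' 1).mpr (nbM_hasSum hθ hmu (k + 1))
  have h2 := hS.mul_left (mu / (θ + mu))
  have h3 : nbM θ mu (k + 1) = mu / (θ + mu) * S := by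
    refine HasSum.unique ?_ h2
    simp only [Finset.sum_range_one, Nat.cast_zero, ne_eq, Nat.succ_ne_zero,
      not_false_eq_true, zero_pow, mul_zero, sub_zero, Nat.add_eq_zero_iff, one_ne_zero, and_false] at h1
    convert! h1 using 1
    funext m
    have := nbW_succ hθ hmu m
    push_cast
    linear_combination (-((m : ℝ) + 1) ^ k) * this
  rw [h3]
  field_simp

lemma nbM_vals {θ mu : ℝ} (hθ : 0 < θ) (hmu : 0 < mu) (h0 : nbM θ mu 0 = 1) :
    nbM θ mu 1 = mu ∧
    (nbM θ mu 2 - mu ^ 2 = mu * (θ + mu) / θ) ∧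
    (nbM θ mu 4 - 4 * mu * nbM θ mu 3 + 6 * mu ^ 2 * nbM θ mu 2 - 3 * mu ^ 4
      = (3 + 6 / θ) * (mu * (θ + mu) / θ) ^ 2 + mu * (θ + mu) / θ) := by
  have s := nbM_hasSum hθ hmu
  have r1 := nbM_rec hθ hmu 0 (θ * nbM θ mu 0 + nbM θ mu 1) (by
    convert! (((s 0).mul_left θ).add (s 1)) using 1
    funext m
    ring)
  have r2 := nbM_rec hθ hmu 1 (θ * nbM θ mu 0 + (θ + 1) * nbM θ mu 1 + nbM θ mu 2) (by
    convert! ((((s 0).mul_left θ).add ((s 1).mul_left _)).add (s 2)) using 1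
    funext m
    ring)
  have r3 := nbM_rec hθ hmu 2 (θ * nbM θ mu 0 + (2 * θ + 1) * nbM θ mu 1
      + (θ + 2) * nbM θ mu 2 + nbM θ mu 3) (by
    convert! (((((s 0).mul_left θ).add ((s 1).mul_left _)).add
      ((s 2).mul_left _)).add (s 3)) using 1
    funext m
    ring)
  have r4 := nbM_rec hθ hmu 3 (θ * nbM θ mu 0 + (3 * θ + 1) * nbM θ mu 1
      + (3 * θ + 3) * nbM θ mu 2 + (θ + 3) * nbM θ mu 3 + nbM θ mu 4) (by
    convert! ((((((s 0).mul_left θ).add ((s 1).mul_left _)).add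
      ((s 2).mul_left _)).add ((s 3).mul_left _)).add (s 4)) using 1
    funext m
    ring)
  norm_num at r1 r2 r3 r4
  rw [h0] at r1 r2 r3 r4
  have hne := hθ.ne'
  have e1 : nbM θ mu 1 = mu := by
    apply mul_left_cancel₀ hne
    linarith
  rw [e1] at r2 r3 r4
  have e2 : nbM θ mu 2 = mu * (θ + (θ + 1) * mu) / θ := by
    rw [eq_div_iff hne]
    linarith
  have e3 : nbM θ mu 3 = mu * (θ + (2 * θ + 1) * mu + (θ + 2) * nbM θ mu 2) / θ := by
    rw [eq_div_iff hne]
    linarith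
  have e4 : nbM θ mu 4 = mu * (θ + (3 * θ + 1) * mu + (3 * θ + 3) * nbM θ mu 2
      + (θ + 3) * nbM θ mu 3) / θ := by
    rw [eq_div_iff hne]
    linarith
  refine ⟨e1, ?_, ?_⟩
  · rw [e2]
    field_simp
    ring
  · rw [e4, e3, e2]
    field_simp
    ring

lemma nb_moment {Ω : Type*} [MeasurableSpace Ω] (P : Measure Ω)
    {θ mu : ℝ} (hθ : 0 < θ) (hmu : 0 < mu) (Y : Ω → ℝ) (hY : Measurable Y)
    (hd : P.map Y = nbMeasure θ mu) (k : ℕ) :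
    Integrable (fun ω => Y ω ^ k) P ∧ ∫ ω, Y ω ^ k ∂P = nbM θ mu k := by
  have hm : nbMeasure θ mu = Measure.sum fun m : ℕ =>
    (ENNReal.ofReal (nbW θ mu m)) • Measure.dirac (m : ℝ) := rfl
  have ht : ∀ m, (ENNReal.ofReal (nbW θ mu m)).toReal = nbW θ mu m := fun m =>
    ENNReal.toReal_ofReal (nbW_pos hθ hmu m).le
  have hsum : Summable (fun m : ℕ => (ENNReal.ofReal (nbW θ mu m)).toReal *
      ‖(fun x : ℝ => x ^ k) (m : ℝ)‖) := by
    simpa [ht] using nbW_summable hθ hmu k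
  have hi := integrable_sum_dirac (f := fun x : ℝ => x ^ k) (x := fun m : ℕ => (m : ℝ))
    (c := fun m => ENNReal.ofReal (nbW θ mu m)) (fun _ => ENNReal.ofReal_ne_top) hsum
  have he := integral_sum_dirac_eq_tsum (f := fun x : ℝ => x ^ k) (x := fun m : ℕ => (m : ℝ))
    (c := fun m => ENNReal.ofReal (nbW θ mu m)) (fun _ => ENNReal.ofReal_ne_top) hsum
  rw [← hm, ← hd] at hi he
  constructor
  · exact hi.comp_measurable hY
  · rw [integral_map hY.aemeasurable hi.aestronglyMeasurable] at he
    rw [he]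
    simp [ht, nbM]

lemma nb_central {Ω : Type*} [MeasurableSpace Ω] (P : Measure Ω) [IsProbabilityMeasure P]
    {θ mu : ℝ} (hθ : 0 < θ) (hmu : 0 < mu) (Y : Ω → ℝ) (hY : Measurable Y)
    (hd : P.map Y = nbMeasure θ mu) :
    Integrable (fun ω => (Y ω - ∫ ω', Y ω' ∂P) ^ 2) P ∧
    ∫ ω, (Y ω - ∫ ω', Y ω' ∂P) ^ 2 ∂P = mu * (θ + mu) / θ ∧
    variance (fun ω => (Y ω - ∫ ω', Y ω' ∂P) ^ 2) P
      = (2 + 6 / θ) * (mu * (θ + mu) / θ) ^ 2 + mu * (θ + mu) / θ := by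
  have hk := nb_moment P hθ hmu Y hY hd
  have h0 : nbM θ mu 0 = 1 := by
    rw [← (hk 0).2]
    simp
  obtain ⟨v1, v2, v4⟩ := nbM_vals hθ hmu h0
  have hmean : ∫ ω', Y ω' ∂P = mu := by
    rw [← v1, ← (hk 1).2]
    simp
  rw [hmean]
  have i1 : Integrable Y P := by simpa using (hk 1).1
  have i2 := (hk 2).1
  have i3 := (hk 3).1
  have i4 := (hk 4).1
  have ex2 : (fun ω => (Y ω - mu) ^ 2) = fun ω => Y ω ^ 2 - 2 * mu * Y ω + mu ^ 2 := by
    funext ω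
    ring
  have ex4 : (fun ω => (Y ω - mu) ^ 4) = fun ω => Y ω ^ 4 - 4 * mu * Y ω ^ 3
      + 6 * mu ^ 2 * Y ω ^ 2 - 4 * mu ^ 3 * Y ω + mu ^ 4 := by
    funext ω
    ring
  have a1 := i2.sub (i1.const_mul (2 * mu))
  have a2 := a1.add (integrable_const (μ := P) (mu ^ 2))
  have b1 := i4.sub (i3.const_mul (4 * mu))
  have b2 := b1.add (i2.const_mul (6 * mu ^ 2))
  have b3 := b2.sub (i1.const_mul (4 * mu ^ 3))
  have b4 := b3.add (integrable_const (μ := P) (mu ^ 4))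
  have I2 : Integrable (fun ω => (Y ω - mu) ^ 2) P := by
    rw [ex2]
    exact a2
  have I4 : Integrable (fun ω => (Y ω - mu) ^ 4) P := by
    rw [ex4]
    exact b4
  have E2 : ∫ ω, (Y ω - mu) ^ 2 ∂P = mu * (θ + mu) / θ := by
    rw [← v2, ex2]
    refine (integral_add a1 (integrable_const _)).trans ?_
    have := integral_sub i2 (i1.const_mul (2 * mu))
    simp only [Pi.sub_apply]
    rw [this, integral_const_mul, hmean, (hk 2).2]
    simp
    ring
  have E4 : ∫ ω, (Y ω - mu) ^ 4 ∂P
      = (3 + 6 / θ) * (mu * (θ + mu) / θ) ^ 2 + mu * (θ + mu) / θ := by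
    rw [← v4, ex4]
    have c1 := integral_sub i4 (i3.const_mul (4 * mu))
    have c2 := integral_add b1 (i2.const_mul (6 * mu ^ 2))
    have c3 := integral_sub b2 (i1.const_mul (4 * mu ^ 3))
    have c4 := integral_add b3 (integrable_const (μ := P) (mu ^ 4))
    simp only [Pi.sub_apply, Pi.add_apply] at c1 c2 c3 c4
    rw [c4, c3, c2, c1]
    simp only [integral_const_mul]
    rw [hmean, (hk 2).2, (hk 3).2, (hk 4).2]
    simp
    ring
  refine ⟨I2, E2, ?_⟩
  have hL : MemLp (fun ω => (Y ω - mu) ^ 2) 2 P := by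
    rw [memLp_two_iff_integrable_sq I2.aestronglyMeasurable]
    refine I4.congr (Filter.Eventually.of_forall fun ω => ?_)
    simp only
    ring
  rw [variance_eq_sub hL, E2]
  have : ∫ ω, ((fun ω => (Y ω - mu) ^ 2) ^ 2) ω ∂P = ∫ ω, (Y ω - mu) ^ 4 ∂P := by
    congr 1
    funext ω
    simp only [Pi.pow_apply]
    ring
  rw [this, E4]
  ring

theorem stmt16
    {Ω : Type*} [MeasurableSpace Ω] (μmeas : Measure Ω) [IsProbabilityMeasure μmeas]
    (n : ℕ) (hn : 1 ≤ n)
    (θ L B : ℝ) (hθ : 0 < θ) (hL : 0 < L) (hB : 0 < B)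
    (mu : Fin n → ℝ)
    (hmulb : ∀ i, Real.exp (-(L * B)) ≤ mu i)
    (hmuub : ∀ i, mu i ≤ Real.exp (L * B))
    (Y : Fin n → Ω → ℝ) (hYmeas : ∀ i, Measurable (Y i))
    (hYdist : ∀ i, μmeas.map (Y i) = nbMeasure θ (mu i)) :
    (∫ ω, (1 / (n : ℝ)) * ∑ i, (Y i ω - ∫ ω', Y i ω' ∂μmeas) ^ 2 ∂μmeas
        ≤ Real.exp (L * B) * (θ + Real.exp (L * B)) / θ) ∧
    ∀ i, variance (fun ω => (Y i ω - ∫ ω', Y i ω' ∂μmeas) ^ 2) μmeas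
        ≤ (2 + 6 / θ) * (Real.exp (L * B) * (θ + Real.exp (L * B)) / θ) ^ 2
          + Real.exp (L * B) * (θ + Real.exp (L * B)) / θ := by
  have hpos : ∀ i, 0 < mu i := fun i => (Real.exp_pos _).trans_le (hmulb i)
  have hc := fun i => nb_central μmeas hθ (hpos i) (Y i) (hYmeas i) (hYdist i)
  have hb : ∀ i, mu i * (θ + mu i) / θ ≤ Real.exp (L * B) * (θ + Real.exp (L * B)) / θ := by
    intro i
    have := hpos i
    have := hmuub i
    gcongr
  have hn0 : (0 : ℝ) < n := by exact_mod_cast hn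
  constructor
  · rw [integral_const_mul, integral_finset_sum _ fun i _ => (hc i).1]
    calc (1 / (n : ℝ)) * ∑ i, ∫ ω, (Y i ω - ∫ ω', Y i ω' ∂μmeas) ^ 2 ∂μmeas
        ≤ (1 / (n : ℝ)) * ∑ _i : Fin n, Real.exp (L * B) * (θ + Real.exp (L * B)) / θ := by
          gcongr with i _
          rw [(hc i).2.1]
          exact hb i
      _ = Real.exp (L * B) * (θ + Real.exp (L * B)) / θ := by
          simp only [Finset.sum_const, Finset.card_univ, Fintype.card_fin, nsmul_eq_mul]
          field_simp
  · intro i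
    rw [(hc i).2.2]
    have h0 : 0 ≤ mu i * (θ + mu i) / θ := by
      have := hpos i
      positivity
    have := hb i
    gcongr
end

section
/- Let β* ∈ ℝ^p with support H = {j : β*_j ≠ 0}, and let β̂ ∈ ℝ^p satisfy β̂_j = 0 for all j ∉ H. Suppose: (i) for every j ∈ H, |β̂_j − β*_j| < |β*_j| and ℓ̇_j(β̂) + 2λ₂·β̂_j = −λ₁·sgn(β*_j); and (ii) for every j ∉ H, |ℓ̇_j(β̂)| ≤ λ₁. Then β̂ is a global minimizer of F(β) = ℓ(β) + λ₁·‖β‖₁ + λ₂·‖β‖₂² over ℝ^p, and sgn(β̂_j) = sgn(β*_j) for every j ∈ {1,…,p} (with the convention sgn(0) = 0). -/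
open Real BigOperators Finset MeasureTheory

theorem log_tangent (θ s t : ℝ) (hθ : 0 < θ) :
    Real.log (θ + Real.exp t) + Real.exp t / (θ + Real.exp t) * (s - t)
      ≤ Real.log (θ + Real.exp s) := by
  have ht := Real.exp_pos t
  have hs := Real.exp_pos s
  have hT : 0 < θ + Real.exp t := by positivity
  have hS : 0 < θ + Real.exp s := by positivity
  have h := convexOn_exp.2 (Set.mem_univ (0 : ℝ)) (Set.mem_univ (s - t))
    (by positivity : 0 ≤ θ / (θ + Real.exp t))
    (by positivity : 0 ≤ Real.exp t / (θ + Real.exp t)) (by field_simp)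
  simp only [smul_eq_mul, mul_zero, zero_add, Real.exp_zero, mul_one, Real.exp_sub] at h
  rw [Real.le_log_iff_exp_le hS, Real.exp_add, Real.exp_log hT]
  calc _ ≤ (θ + Real.exp t) * (θ / (θ + Real.exp t)
          + Real.exp t / (θ + Real.exp t) * (Real.exp s / Real.exp t)) :=
        mul_le_mul_of_nonneg_left h hT.le
    _ = _ := by field_simp

theorem scalar_tangent (θ y s t : ℝ) (hθ : 0 < θ) (hy : 0 ≤ y) :
    θ * (Real.exp t - y) / (θ + Real.exp t) * (s - t)
      ≤ (y * t - (θ + y) * Real.log (θ + Real.exp t))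
        - (y * s - (θ + y) * Real.log (θ + Real.exp s)) := by
  have hT : 0 < θ + Real.exp t := by positivity
  have h := mul_le_mul_of_nonneg_left (log_tangent θ s t hθ) (by positivity : 0 ≤ θ + y)
  have e : θ * (Real.exp t - y) / (θ + Real.exp t) * (s - t)
      = (θ + y) * (Real.exp t / (θ + Real.exp t) * (s - t)) - y * (s - t) := by
    field_simp
    ring
  rw [e]
  linarith

theorem negLogLik_tangent (n p : ℕ) (θ : ℝ) (hθ : 0 < θ)
    (x : Fin n → Fin p → ℝ) (y : Fin n → ℝ) (hy : ∀ i, 0 ≤ y i) (b β : Fin p → ℝ) :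
    negLogLik n p θ x y b + ∑ j, gradComp n p θ x y b j * (β j - b j)
      ≤ negLogLik n p θ x y β := by
  have e : ∑ j, gradComp n p θ x y b j * (β j - b j)
      = (1 / (n : ℝ)) * ∑ i, θ * (Real.exp (dotp (x i) b) - y i)
          / (θ + Real.exp (dotp (x i) b)) * (dotp (x i) β - dotp (x i) b) := by
    simp only [gradComp, mul_assoc, ← Finset.mul_sum, Finset.sum_mul]
    rw [Finset.sum_comm]
    congr 1
    refine Finset.sum_congr rfl fun i _ => ?_
    have : dotp (x i) β - dotp (x i) b = ∑ j, x i j * (β j - b j) := by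
      simp only [dotp, mul_sub, Finset.sum_sub_distrib]
    rw [this, Finset.mul_sum]
    refine Finset.sum_congr rfl fun j _ => ?_
    ring
  have h := Finset.sum_le_sum fun i (_ : i ∈ Finset.univ) =>
    scalar_tangent θ (y i) (dotp (x i) β) (dotp (x i) b) hθ (hy i)
  rw [Finset.sum_sub_distrib] at h
  have h2 := mul_le_mul_of_nonneg_left h (by positivity : 0 ≤ 1 / (n : ℝ))
  rw [e]
  simp only [negLogLik]
  linarith

theorem sign_close (a b : ℝ) (h : |b - a| < |a|) : Real.sign b = Real.sign a := by
  rcases lt_trichotomy a 0 with ha | ha | ha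
  · rw [abs_of_neg ha] at h
    have := (abs_lt.1 h).2
    rw [Real.sign_of_neg ha, Real.sign_of_neg (by linarith)]
  · simp [ha] at h
    exact absurd h (not_lt.2 (abs_nonneg b))
  · rw [abs_of_pos ha] at h
    have := (abs_lt.1 h).1
    rw [Real.sign_of_pos ha, Real.sign_of_pos (by linarith)]

theorem stmt19
    (n p : ℕ) (hn : 1 ≤ n) (hp : 1 ≤ p)
    (θ : ℝ) (hθ : 0 < θ)
    (x : Fin n → Fin p → ℝ) (y : Fin n → ℝ) (hy : ∀ i, 0 ≤ y i)
    (lam1 lam2 : ℝ) (hlam1 : 0 < lam1) (hlam2 : 0 < lam2)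
    (betas betah : Fin p → ℝ)
    (hzero : ∀ j, betas j = 0 → betah j = 0)
    (hclose : ∀ j, betas j ≠ 0 → |betah j - betas j| < |betas j|)
    (hkktH : ∀ j, betas j ≠ 0 →
      gradComp n p θ x y betah j + 2 * lam2 * betah j = -lam1 * Real.sign (betas j))
    (hkktHc : ∀ j, betas j = 0 → |gradComp n p θ x y betah j| ≤ lam1) :
    (∀ β : Fin p → ℝ,
        enObj n p θ x y lam1 lam2 betah ≤ enObj n p θ x y lam1 lam2 β) ∧
      ∀ j, Real.sign (betah j) = Real.sign (betas j) := by
  have hsign : ∀ j, Real.sign (betah j) = Real.sign (betas j) := by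
    intro j
    by_cases h : betas j = 0
    · rw [h, hzero j h]
    · exact sign_close _ _ (hclose j h)
  refine ⟨fun β => ?_, hsign⟩
  have key : ∀ j, lam1 * |betah j| + lam2 * (betah j) ^ 2
      ≤ gradComp n p θ x y betah j * (β j - betah j) + lam1 * |β j| + lam2 * (β j) ^ 2 := by
    intro j
    by_cases h : betas j = 0
    · have hg := hkktHc j h
      have h1 : |gradComp n p θ x y betah j * β j| ≤ lam1 * |β j| := by
        rw [abs_mul]
        exact mul_le_mul_of_nonneg_right hg (abs_nonneg _)
      have h2 := (abs_le.1 h1).1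
      have h3 : 0 ≤ lam2 * (β j) ^ 2 := by positivity
      simp only [hzero j h, abs_zero, mul_zero, sub_zero]
      linarith
    · have hg := hkktH j h
      rw [← hsign j] at hg
      have hg' : gradComp n p θ x y betah j
        = -lam1 * Real.sign (betah j) - 2 * lam2 * betah j := by linarith
      have hq : 0 ≤ lam2 * (β j - betah j) ^ 2 := by positivity
      have e1 : Real.sign (betah j) * betah j = |betah j| := by
        rcases lt_trichotomy (betah j) 0 with ha | ha | ha
        · rw [Real.sign_of_neg ha, abs_of_neg ha]; ring
        · simp [ha]
        · rw [Real.sign_of_pos ha, abs_of_pos ha]; ring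
      have e2 : Real.sign (betah j) * β j ≤ |β j| := by
        rcases Real.sign_apply_eq (betah j) with ha | ha | ha <;> rw [ha]
        · linarith [neg_abs_le (β j)]
        · simp
        · linarith [le_abs_self (β j)]
      have e3 := mul_le_mul_of_nonneg_left e2 hlam1.le
      rw [hg', ← e1]
      linarith
  have hs := Finset.sum_le_sum fun j (_ : j ∈ Finset.univ) => key j
  simp only [Finset.sum_add_distrib, ← Finset.mul_sum] at hs
  have ht := negLogLik_tangent n p θ hθ x y hy betah β
  simp only [enObj]
  linarith
end
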